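/- Let L be a nilpotent Lie superalgebra of dimension (m | n) with dim L' = (r | s), r+s ≥ 1, over a field of characteristic ≠ 2,3. Then dim M(L) ≤ (1/2)(m+n+r+s-2)(m+n-r-s-1) + n + 1. Moreover, when r+s = 1, equality holds if and only if L ≅ H(1,0) ⊕ A(m-3 | n), where H(1,0) is the 3-dimensional even Heisenberg algebra and A(m-3 | n) is abelian. -/

import Mathlib

open Module Function TensorProduct

/-- A Lie superalgebra over a field `K`, encoded via a grading involution `J`
(the even part is the `+1`-eigenspace, the odd part the `-1`-eigenspace),
a bilinear bracket `br` satisfying graded skew-symmetry and the graded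
Jacobi identity on homogeneous elements. -/
structure SuperLie (K : Type) [Field K] : Type 1 where
  carrier : Type
  [acg : AddCommGroup carrier]
  [mod : Module K carrier]
  J : carrier →ₗ[K] carrier
  br : carrier →ₗ[K] carrier →ₗ[K] carrier
  J_inv : ∀ x, J (J x) = x
  J_br : ∀ x y, J (br x y) = br (J x) (J y)
  skew_e : ∀ x y, J x = x → br x y = - br y x
  skew_o : ∀ x y, J x = -x → J y = -y → br x y = br y x
  jacobi : ∀ (a b c : Bool) (x y z : carrier),
    J x = (if a then -x else x) → J y = (if b then -y else y) →
    J z = (if c then -z else z) →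
    (if a && c then (-1 : K) else 1) • br x (br y z)
      + (if b && a then (-1 : K) else 1) • br y (br z x)
      + (if c && b then (-1 : K) else 1) • br z (br x y) = 0

attribute [instance] SuperLie.acg SuperLie.mod

namespace SuperLie

variable {K : Type} [Field K]

/-- The even part `L₀`. -/
def evenPart (A : SuperLie K) : Submodule K A.carrier :=
  LinearMap.ker (A.J - LinearMap.id)

/-- The odd part `L₁`. -/
def oddPart (A : SuperLie K) : Submodule K A.carrier :=
  LinearMap.ker (A.J + LinearMap.id)

/-- The center `Z(L) = {z | [z,x] = 0 for all x}`. -/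
def center (A : SuperLie K) : Submodule K A.carrier :=
  ⨅ y, LinearMap.ker (A.br.flip y)

/-- The derived subalgebra `L' = [L,L]`. -/
def derived (A : SuperLie K) : Submodule K A.carrier :=
  Submodule.span K {z | ∃ x y, A.br x y = z}

/-- The descending central series `C⁰(L) = L`, `C^{k+1}(L) = [C^k(L), L]`. -/
def lcs (A : SuperLie K) : ℕ → Submodule K A.carrier
  | 0 => ⊤
  | (k+1) => Submodule.span K {z | ∃ x ∈ lcs A k, ∃ y, A.br x y = z}

/-- The second center `Z₂(L)`: those `x` with `[x,y] ∈ Z(L)` for all `y`. -/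
def Z2 (A : SuperLie K) : Submodule K A.carrier :=
  ⨅ y, Submodule.comap (A.br.flip y) A.center

/-- Nilpotency: the descending central series terminates at zero. -/
def IsNilpotent (A : SuperLie K) : Prop := ∃ k, A.lcs k = ⊥

/-- Abelian: identically vanishing bracket. -/
def IsAbelian (A : SuperLie K) : Prop := ∀ x y, A.br x y = 0

/-- A homomorphism of Lie superalgebras: an even linear map commuting with the
grading and preserving brackets. -/
structure Hom (A B : SuperLie K) where
  toLin : A.carrier →ₗ[K] B.carrier
  map_J : ∀ x, toLin (A.J x) = B.J (toLin x)
  map_br : ∀ x y, toLin (A.br x y) = B.br (toLin x) (toLin y)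

/-- The dimension of the Schur multiplier `M(A)`, characterized as the maximal
dimension of the kernel of a stem extension `0 → M → B → A → 0`
(i.e. `M = ker f ⊆ Z(B) ∩ B'`); a stem extension of maximal dimension is a
stem cover, whose kernel is isomorphic to the Schur multiplier
`M(A) = ([F,F] ∩ R)/[F,R]` coming from any free presentation `0 → R → F → A → 0`. -/
noncomputable def multDim (A : SuperLie K) : ℕ :=
  sSup {d | ∃ (B : SuperLie K) (f : Hom B A),
    Surjective f.toLin ∧
    LinearMap.ker f.toLin ≤ B.center ⊓ B.derived ∧
    finrank K (LinearMap.ker f.toLin) = d}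

/-- `A ≅ H(0,1)`: basis `z` (even), `y` (odd), `[y,y] = z`, `z` central. -/
def IsH01 (A : SuperLie K) : Prop :=
  ∃ z y : A.carrier, z ∈ A.evenPart ∧ y ∈ A.oddPart ∧
    LinearIndependent K ![z, y] ∧
    Submodule.span K ({z, y} : Set A.carrier) = ⊤ ∧
    A.br y y = z ∧ z ∈ A.center

/-- `A ≅ H(1,0)`: the purely even 3-dimensional Heisenberg algebra. -/
def IsH10 (A : SuperLie K) : Prop :=
  ∃ x y z : A.carrier, x ∈ A.evenPart ∧ y ∈ A.evenPart ∧ z ∈ A.evenPart ∧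
    LinearIndependent K ![x, y, z] ∧
    Submodule.span K ({x, y, z} : Set A.carrier) = ⊤ ∧
    A.br x y = z ∧ z ∈ A.center

/-- `A ≅ H(0,2)`: even basis `{z}`, odd basis `{y₁,y₂}`, `[yᵢ,yᵢ] = z`. -/
def IsH02 (A : SuperLie K) : Prop :=
  ∃ z y₁ y₂ : A.carrier, z ∈ A.evenPart ∧ y₁ ∈ A.oddPart ∧ y₂ ∈ A.oddPart ∧
    LinearIndependent K ![z, y₁, y₂] ∧
    Submodule.span K ({z, y₁, y₂} : Set A.carrier) = ⊤ ∧
    A.br y₁ y₁ = z ∧ A.br y₂ y₂ = z ∧ A.br y₁ y₂ = 0 ∧ z ∈ A.center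

/-- `A ≅ H₁`: even basis `{x}`, odd basis `{y,z}`, `[x,y] = z`, `z` central. -/
def IsHodd1 (A : SuperLie K) : Prop :=
  ∃ x y z : A.carrier, x ∈ A.evenPart ∧ y ∈ A.oddPart ∧ z ∈ A.oddPart ∧
    LinearIndependent K ![x, y, z] ∧
    Submodule.span K ({x, y, z} : Set A.carrier) = ⊤ ∧
    A.br x y = z ∧ A.br y y = 0 ∧ z ∈ A.center

/-- `A ≅ H(p,q)`: the special Heisenberg Lie superalgebra with even center,
of superdimension `(2p+1 | q)`: even basis `x₁,…,x_{2p}, z` with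
`[xᵢ, x_{p+i}] = z`, odd basis `y₁,…,y_q` with `[yⱼ,yⱼ] = z`, `z` central. -/
def IsHeisEven (A : SuperLie K) (p q : ℕ) : Prop :=
  ∃ (x : Fin (2*p) → A.carrier) (y : Fin q → A.carrier) (z : A.carrier),
    (∀ i, x i ∈ A.evenPart) ∧ (∀ j, y j ∈ A.oddPart) ∧ z ∈ A.evenPart ∧
    LinearIndependent K (Sum.elim x (Sum.elim y (fun _ : Fin 1 => z))) ∧
    Submodule.span K (Set.range (Sum.elim x (Sum.elim y (fun _ : Fin 1 => z)))) = ⊤ ∧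
    (∀ i j : Fin (2*p), A.br (x i) (x j) =
      if (j : ℕ) = (i : ℕ) + p then z else if (i : ℕ) = (j : ℕ) + p then -z else 0) ∧
    (∀ i j : Fin q, A.br (y i) (y j) = if i = j then z else 0) ∧
    (∀ i j, A.br (x i) (y j) = 0) ∧ z ∈ A.center

/-- `A ≅ H_p`: the special Heisenberg Lie superalgebra with odd center, of
superdimension `(p | p+1)`: even basis `x₁,…,x_p`, odd basis `y₁,…,y_p, z`,
with `[xᵢ, yᵢ] = z` and `z` central. -/
def IsHeisOdd (A : SuperLie K) (p : ℕ) : Prop :=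
  ∃ (x : Fin p → A.carrier) (y : Fin p → A.carrier) (z : A.carrier),
    (∀ i, x i ∈ A.evenPart) ∧ (∀ j, y j ∈ A.oddPart) ∧ z ∈ A.oddPart ∧
    LinearIndependent K (Sum.elim x (Sum.elim y (fun _ : Fin 1 => z))) ∧
    Submodule.span K (Set.range (Sum.elim x (Sum.elim y (fun _ : Fin 1 => z)))) = ⊤ ∧
    (∀ i j : Fin p, A.br (x i) (x j) = 0) ∧
    (∀ i j : Fin p, A.br (y i) (y j) = 0) ∧
    (∀ i j : Fin p, A.br (x i) (y j) = if i = j then z else 0) ∧ z ∈ A.center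

/-- `A ≅ H(p,q) ⊕ A(a|b)`: direct sum of the special Heisenberg Lie
superalgebra with even center and an abelian superalgebra of superdimension
`(a|b)` (central basis vectors `u₁,…,u_a` even and `v₁,…,v_b` odd). -/
def IsHeisEvenSum (A : SuperLie K) (p q a b : ℕ) : Prop :=
  ∃ (x : Fin (2*p) → A.carrier) (y : Fin q → A.carrier) (z : A.carrier)
    (u : Fin a → A.carrier) (v : Fin b → A.carrier),
    (∀ i, x i ∈ A.evenPart) ∧ (∀ j, y j ∈ A.oddPart) ∧ z ∈ A.evenPart ∧
    (∀ i, u i ∈ A.evenPart) ∧ (∀ j, v j ∈ A.oddPart) ∧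
    LinearIndependent K
      (Sum.elim x (Sum.elim y (Sum.elim (fun _ : Fin 1 => z) (Sum.elim u v)))) ∧
    Submodule.span K (Set.range
      (Sum.elim x (Sum.elim y (Sum.elim (fun _ : Fin 1 => z) (Sum.elim u v))))) = ⊤ ∧
    (∀ i j : Fin (2*p), A.br (x i) (x j) =
      if (j : ℕ) = (i : ℕ) + p then z else if (i : ℕ) = (j : ℕ) + p then -z else 0) ∧
    (∀ i j : Fin q, A.br (y i) (y j) = if i = j then z else 0) ∧
    (∀ i j, A.br (x i) (y j) = 0) ∧ z ∈ A.center ∧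
    (∀ i, u i ∈ A.center) ∧ (∀ j, v j ∈ A.center)

/-- `A ≅ H_p ⊕ A(a|b)`: direct sum of the special Heisenberg Lie superalgebra
with odd center and an abelian superalgebra of superdimension `(a|b)`. -/
def IsHeisOddSum (A : SuperLie K) (p a b : ℕ) : Prop :=
  ∃ (x : Fin p → A.carrier) (y : Fin p → A.carrier) (z : A.carrier)
    (u : Fin a → A.carrier) (v : Fin b → A.carrier),
    (∀ i, x i ∈ A.evenPart) ∧ (∀ j, y j ∈ A.oddPart) ∧ z ∈ A.oddPart ∧
    (∀ i, u i ∈ A.evenPart) ∧ (∀ j, v j ∈ A.oddPart) ∧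
    LinearIndependent K
      (Sum.elim x (Sum.elim y (Sum.elim (fun _ : Fin 1 => z) (Sum.elim u v)))) ∧
    Submodule.span K (Set.range
      (Sum.elim x (Sum.elim y (Sum.elim (fun _ : Fin 1 => z) (Sum.elim u v))))) = ⊤ ∧
    (∀ i j : Fin p, A.br (x i) (x j) = 0) ∧
    (∀ i j : Fin p, A.br (y i) (y j) = 0) ∧
    (∀ i j : Fin p, A.br (x i) (y j) = if i = j then z else 0) ∧ z ∈ A.center ∧
    (∀ i, u i ∈ A.center) ∧ (∀ j, v j ∈ A.center)

/-- `A ≅ L_{4,0}`: purely even filiform algebra, basis `x,y,z,w`,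
`[x,y] = z`, `[y,z] = w`, all other basis brackets zero. -/
def IsL40 (A : SuperLie K) : Prop :=
  ∃ x y z w : A.carrier,
    x ∈ A.evenPart ∧ y ∈ A.evenPart ∧ z ∈ A.evenPart ∧ w ∈ A.evenPart ∧
    LinearIndependent K ![x, y, z, w] ∧
    Submodule.span K ({x, y, z, w} : Set A.carrier) = ⊤ ∧
    A.br x y = z ∧ A.br y z = w ∧ A.br x z = 0 ∧
    A.br x w = 0 ∧ A.br y w = 0 ∧ A.br z w = 0

/-- `A ≅ L_{5,0}^2`: purely even, basis `x,y,z,v,w`, `[x,y] = v`, `[y,z] = w`,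
with `v, w` central and all other basis brackets zero. -/
def IsL502 (A : SuperLie K) : Prop :=
  ∃ x y z v w : A.carrier,
    x ∈ A.evenPart ∧ y ∈ A.evenPart ∧ z ∈ A.evenPart ∧
    v ∈ A.evenPart ∧ w ∈ A.evenPart ∧
    LinearIndependent K ![x, y, z, v, w] ∧
    Submodule.span K ({x, y, z, v, w} : Set A.carrier) = ⊤ ∧
    A.br x y = v ∧ A.br y z = w ∧ A.br x z = 0 ∧
    v ∈ A.center ∧ w ∈ A.center

end SuperLie

namespace SuperLie

section helpers

variable {K : Type} [Field K]

lemma finrank_map_add {V W : Type} [AddCommGroup V] [Module K V] [AddCommGroup W] [Module K W]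
    [FiniteDimensional K V] (g : V →ₗ[K] W) (S : Submodule K V) :
    finrank K (S.map g) + finrank K ↥(S ⊓ LinearMap.ker g) = finrank K S := by
  have h := LinearMap.finrank_range_add_finrank_ker (g.domRestrict S)
  rw [LinearMap.range_domRestrict] at h
  have h2 : finrank K ↥(S ⊓ LinearMap.ker g) = finrank K (LinearMap.ker (g.domRestrict S)) := by
    rw [← Submodule.map_comap_subtype, Submodule.finrank_map_subtype_eq, LinearMap.ker_domRestrict]
  rw [h2]; exact h

lemma exists_rel_compl {V : Type} [AddCommGroup V] [Module K V] (P S : Submodule K V)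
    (h : P ≤ S) : ∃ E ≤ S, P ⊔ E = S ∧ P ⊓ E = ⊥ := by
  obtain ⟨E, hE⟩ := Submodule.exists_isCompl P
  refine ⟨E ⊓ S, inf_le_right, ?_, ?_⟩
  · rw [← sup_inf_assoc_of_le E h, hE.sup_eq_top, top_inf_eq]
  · rw [← inf_assoc, hE.inf_eq_bot, bot_inf_eq]

/-- Homogeneous elements. -/
def Hmg (A : SuperLie K) (x : A.carrier) : Prop := A.J x = x ∨ A.J x = -x

variable {A B : SuperLie K}

lemma mem_even {x : A.carrier} : x ∈ A.evenPart ↔ A.J x = x := by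
  simp [evenPart, sub_eq_zero]

lemma mem_odd {x : A.carrier} : x ∈ A.oddPart ↔ A.J x = -x := by
  simp [oddPart, add_eq_zero_iff_eq_neg]

lemma mem_center {x : A.carrier} : x ∈ A.center ↔ ∀ y, A.br x y = 0 := by
  simp [center]

lemma Hmg.exists_bool {x : A.carrier} (h : Hmg A x) :
    ∃ a : Bool, A.J x = (if a then -x else x) := by
  rcases h with h | h
  · exact ⟨false, by simpa using h⟩
  · exact ⟨true, by simpa using h⟩

lemma Hmg.skew {x y : A.carrier} (hx : Hmg A x) (hy : Hmg A y) :
    ∃ c : K, c ≠ 0 ∧ A.br x y = c • A.br y x := by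
  rcases hx with hx | hx
  · exact ⟨-1, by simp, by rw [A.skew_e x y hx]; simp⟩
  · rcases hy with hy | hy
    · exact ⟨-1, by simp, by rw [A.skew_e y x hy]; simp⟩
    · exact ⟨1, by simp, by rw [A.skew_o x y hx hy]; simp⟩

lemma Hmg.br {x y : A.carrier} (hx : Hmg A x) (hy : Hmg A y) : Hmg A (A.br x y) := by
  unfold Hmg
  rw [A.J_br]
  rcases hx with hx | hx <;> rcases hy with hy | hy <;> simp [hx, hy]

lemma Hmg.jac {x y z : A.carrier} (hx : Hmg A x) (hy : Hmg A y) (hz : Hmg A z) :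
    ∃ c₁ c₂ c₃ : K, c₁ ≠ 0 ∧ c₂ ≠ 0 ∧ c₃ ≠ 0 ∧
      c₁ • A.br x (A.br y z) + c₂ • A.br y (A.br z x) + c₃ • A.br z (A.br x y) = 0 := by
  obtain ⟨a, ha⟩ := hx.exists_bool
  obtain ⟨b, hb⟩ := hy.exists_bool
  obtain ⟨c, hc⟩ := hz.exists_bool
  refine ⟨_, _, _, ?_, ?_, ?_, A.jacobi a b c x y z ha hb hc⟩ <;> split_ifs <;> simp

/-- even component -/
noncomputable def ev (A : SuperLie K) (x : A.carrier) : A.carrier := (2 : K)⁻¹ • (x + A.J x)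
/-- odd component -/
noncomputable def od (A : SuperLie K) (x : A.carrier) : A.carrier := (2 : K)⁻¹ • (x - A.J x)

lemma J_ev (x : A.carrier) : A.J (A.ev x) = A.ev x := by
  simp [ev, A.J_inv, add_comm]

lemma J_od (x : A.carrier) : A.J (A.od x) = -A.od x := by
  simp only [od, map_smul, map_sub, A.J_inv]
  rw [← smul_neg, neg_sub]

lemma hmg_ev (x : A.carrier) : Hmg A (A.ev x) := Or.inl (J_ev x)
lemma hmg_od (x : A.carrier) : Hmg A (A.od x) := Or.inr (J_od x)

lemma ev_add_od (h2 : (2 : K) ≠ 0) (x : A.carrier) : A.ev x + A.od x = x := by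
  simp only [ev, od]
  rw [← smul_add, add_add_sub_cancel, ← two_smul K x, smul_smul, inv_mul_cancel₀ h2, one_smul]

lemma ev_mem {S : Submodule K A.carrier} (hS : ∀ x ∈ S, A.J x ∈ S) {x : A.carrier} (hx : x ∈ S) :
    A.ev x ∈ S := S.smul_mem _ (S.add_mem hx (hS _ hx))

lemma od_mem {S : Submodule K A.carrier} (hS : ∀ x ∈ S, A.J x ∈ S) {x : A.carrier} (hx : x ∈ S) :
    A.od x ∈ S := S.smul_mem _ (S.sub_mem hx (hS _ hx))

lemma eq_zero_of_eq_neg (h2 : (2 : K) ≠ 0) {V : Type} [AddCommGroup V] [Module K V] {x : V}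
    (h : x = -x) : x = 0 := by
  have : (2 : K) • x = 0 := by
    rw [two_smul]; nth_rewrite 1 [h]; simp
  simpa [h2] using this

lemma even_inf_odd (h2 : (2 : K) ≠ 0) : A.evenPart ⊓ A.oddPart = ⊥ := by
  rw [eq_bot_iff]
  intro x hx
  obtain ⟨h, h'⟩ := hx
  have h := mem_even.1 h
  have h' := mem_odd.1 h'
  exact eq_zero_of_eq_neg h2 (h.symm.trans h')

lemma finrank_graded (h2 : (2 : K) ≠ 0) [FiniteDimensional K A.carrier]
    {S : Submodule K A.carrier} (hS : ∀ x ∈ S, A.J x ∈ S) :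
    finrank K ↥(S ⊓ A.evenPart) + finrank K ↥(S ⊓ A.oddPart) = finrank K S := by
  have h := Submodule.finrank_sup_add_finrank_inf_eq (S ⊓ A.evenPart) (S ⊓ A.oddPart)
  have e1 : (S ⊓ A.evenPart) ⊔ (S ⊓ A.oddPart) = S := by
    apply le_antisymm (sup_le inf_le_left inf_le_left)
    intro x hx
    rw [← ev_add_od h2 x]
    exact Submodule.add_mem_sup ⟨ev_mem hS hx, mem_even.2 (J_ev x)⟩ ⟨od_mem hS hx, mem_odd.2 (J_od x)⟩
  have e2 : (S ⊓ A.evenPart) ⊓ (S ⊓ A.oddPart) = ⊥ := by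
    rw [← inf_inf_distrib_left, even_inf_odd h2, inf_bot_eq]
  rw [e1, e2, finrank_bot] at h
  omega

lemma finrank_even_odd (h2 : (2 : K) ≠ 0) (A : SuperLie K) [FiniteDimensional K A.carrier] :
    finrank K A.evenPart + finrank K A.oddPart = finrank K A.carrier := by
  have := finrank_graded (A := A) h2 (S := ⊤) (by simp)
  rwa [top_inf_eq, top_inf_eq, finrank_top] at this

lemma br_mem_derived (x y : A.carrier) : A.br x y ∈ A.derived :=
  Submodule.subset_span ⟨x, y, rfl⟩

lemma J_derived (x : A.carrier) (hx : x ∈ A.derived) : A.J x ∈ A.derived := by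
  have : A.derived ≤ A.derived.comap A.J := by
    refine Submodule.span_le.2 ?_
    rintro _ ⟨x, y, rfl⟩
    simp only [SetLike.mem_coe, Submodule.mem_comap, A.J_br]
    exact br_mem_derived _ _
  exact this hx

/-- a bilinear induction on homogeneous elements -/
lemma br_mem_of_hmg (h2 : (2 : K) ≠ 0) {S : Submodule K A.carrier}
    (h : ∀ x y, Hmg A x → Hmg A y → A.br x y ∈ S) (x y : A.carrier) : A.br x y ∈ S := by
  rw [← ev_add_od h2 x, ← ev_add_od h2 y]
  simp only [map_add, LinearMap.add_apply]
  exact S.add_mem (S.add_mem (h _ _ (hmg_ev _) (hmg_ev _)) (h _ _ (hmg_od _) (hmg_ev _)))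
    (S.add_mem (h _ _ (hmg_ev _) (hmg_od _)) (h _ _ (hmg_od _) (hmg_od _)))

lemma derived_le_of_hmg (h2 : (2 : K) ≠ 0) {S : Submodule K A.carrier}
    (h : ∀ x y, Hmg A x → Hmg A y → A.br x y ∈ S) : A.derived ≤ S := by
  refine Submodule.span_le.2 ?_
  rintro _ ⟨x, y, rfl⟩
  exact br_mem_of_hmg h2 h x y

lemma J_center (x : A.carrier) (hx : x ∈ A.center) : A.J x ∈ A.center := by
  rw [mem_center] at hx ⊢
  intro y
  rw [← A.J_inv y, ← A.J_br, hx, map_zero]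

lemma br_center (h2 : (2 : K) ≠ 0) {x : A.carrier} (hx : x ∈ A.center) (y : A.carrier) :
    A.br y x = 0 := by
  have key : ∀ x y, Hmg A x → Hmg A y → x ∈ A.center → A.br y x = 0 := by
    intro x y hx hy hc
    obtain ⟨c, -, h⟩ := hy.skew hx
    rw [h, mem_center.1 hc, smul_zero]
  rw [← ev_add_od h2 x, ← ev_add_od h2 y]
  have h1 := ev_mem J_center hx
  have h1' := od_mem J_center hx
  simp only [map_add, LinearMap.add_apply]
  rw [key _ _ (hmg_ev _) (hmg_ev _) h1, key _ _ (hmg_ev _) (hmg_od _) h1,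
    key _ _ (hmg_od _) (hmg_ev _) h1', key _ _ (hmg_od _) (hmg_od _) h1']
  simp

lemma J_lcs (k : ℕ) : ∀ x ∈ A.lcs k, A.J x ∈ A.lcs k := by
  induction k with
  | zero => intro x _; simp [lcs]
  | succ k ih =>
    have : A.lcs (k+1) ≤ (A.lcs (k+1)).comap A.J := by
      conv_lhs => rw [lcs]
      refine Submodule.span_le.2 ?_
      rintro _ ⟨x, hx, y, rfl⟩
      simp only [SetLike.mem_coe, Submodule.mem_comap, A.J_br]
      exact Submodule.subset_span ⟨_, ih _ hx, _, rfl⟩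
    exact this

lemma br_mem_lcs {k : ℕ} {x : A.carrier} (hx : x ∈ A.lcs k) (y : A.carrier) :
    A.br x y ∈ A.lcs (k+1) := Submodule.subset_span ⟨_, hx, _, rfl⟩

lemma lcs_one : A.lcs 1 = A.derived := by
  simp [lcs, derived]

lemma lcs_succ_le_derived (k : ℕ) : A.lcs (k+1) ≤ A.derived := by
  refine Submodule.span_le.2 ?_
  rintro _ ⟨x, _, y, rfl⟩
  exact br_mem_derived _ _

lemma map_derived (f : Hom B A) (hf : Surjective f.toLin) : B.derived.map f.toLin = A.derived := by
  rw [derived, derived, Submodule.map_span]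
  congr 1
  ext z
  constructor
  · rintro ⟨_, ⟨x, y, rfl⟩, rfl⟩
    exact ⟨_, _, (f.map_br x y).symm⟩
  · rintro ⟨x, y, rfl⟩
    obtain ⟨x, rfl⟩ := hf x
    obtain ⟨y, rfl⟩ := hf y
    exact ⟨_, ⟨x, y, rfl⟩, f.map_br x y⟩

lemma map_lcs (f : Hom B A) (hf : Surjective f.toLin) (k : ℕ) :
    (B.lcs k).map f.toLin = A.lcs k := by
  induction k with
  | zero => simp [lcs, LinearMap.range_eq_top.2 hf]
  | succ k ih =>
    rw [lcs, lcs, Submodule.map_span]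
    congr 1
    ext z
    constructor
    · rintro ⟨_, ⟨x, hx, y, rfl⟩, rfl⟩
      exact ⟨_, ih ▸ Submodule.mem_map_of_mem hx, _, (f.map_br x y).symm⟩
    · rintro ⟨x, hx, y, rfl⟩
      rw [← ih] at hx
      obtain ⟨x, hx, rfl⟩ := hx
      obtain ⟨y, rfl⟩ := hf y
      exact ⟨_, ⟨x, hx, y, rfl⟩, f.map_br x y⟩

lemma map_ev (f : Hom B A) (x : B.carrier) : f.toLin (B.ev x) = A.ev (f.toLin x) := by
  simp [ev, f.map_J]

lemma map_od (f : Hom B A) (x : B.carrier) : f.toLin (B.od x) = A.od (f.toLin x) := by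
  simp [od, f.map_J]

lemma ev_of_even (h2 : (2 : K) ≠ 0) {x : A.carrier} (h : A.J x = x) : A.ev x = x := by
  rw [ev, h, ← two_smul K x, smul_smul, inv_mul_cancel₀ h2, one_smul]

lemma od_of_odd (h2 : (2 : K) ≠ 0) {x : A.carrier} (h : A.J x = -x) : A.od x = x := by
  rw [od, h, sub_neg_eq_add, ← two_smul K x, smul_smul, inv_mul_cancel₀ h2, one_smul]

lemma map_oddPart (h2 : (2 : K) ≠ 0) (f : Hom B A) (hf : Surjective f.toLin) :
    B.oddPart.map f.toLin = A.oddPart := by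
  ext y
  constructor
  · rintro ⟨x, hx, rfl⟩
    have hx := mem_odd.1 hx
    rw [mem_odd, ← f.map_J, hx, map_neg]
  · intro hy
    obtain ⟨x, rfl⟩ := hf y
    refine ⟨B.od x, mem_odd.2 (J_od x), ?_⟩
    rw [map_od, od_of_odd h2 (mem_odd.1 hy)]

lemma hmg_lift (h2 : (2 : K) ≠ 0) (f : Hom B A) (hf : Surjective f.toLin) {y : A.carrier}
    (hy : Hmg A y) : ∃ x, Hmg B x ∧ f.toLin x = y := by
  obtain ⟨x, rfl⟩ := hf y
  rcases hy with h | h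
  · exact ⟨_, hmg_ev x, by rw [map_ev, ev_of_even h2 h]⟩
  · exact ⟨_, hmg_od x, by rw [map_od, od_of_odd h2 h]⟩

/-- Quotient by a graded ideal. -/
noncomputable def quot (h2 : (2 : K) ≠ 0) (B : SuperLie K) (I : Submodule K B.carrier)
    (hJ : ∀ x ∈ I, B.J x ∈ I)
    (hl : ∀ x ∈ I, ∀ y, B.br x y ∈ I) (hr : ∀ x ∈ I, ∀ y, B.br y x ∈ I) : SuperLie K :=
  let br : (B.carrier ⧸ I) →ₗ[K] (B.carrier ⧸ I) →ₗ[K] (B.carrier ⧸ I) :=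
    I.liftQ
      ({ toFun := fun x => I.liftQ (I.mkQ ∘ₗ B.br x) (by
            intro y hy
            simpa using hr y hy x)
         map_add' := by
            intro x y
            apply Submodule.linearMap_qext
            ext v
            simp
         map_smul' := by
            intro c x
            apply Submodule.linearMap_qext
            ext v
            simp } : B.carrier →ₗ[K] (B.carrier ⧸ I) →ₗ[K] (B.carrier ⧸ I))
      (by
        intro x hx
        rw [LinearMap.mem_ker]
        apply Submodule.linearMap_qext
        ext v
        simpa using hl x hx v)
  let J : (B.carrier ⧸ I) →ₗ[K] (B.carrier ⧸ I) := I.mapQ I B.J hJ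
  have hbr : ∀ x y, br (I.mkQ x) (I.mkQ y) = I.mkQ (B.br x y) := fun x y => rfl
  have hJm : ∀ x, J (I.mkQ x) = I.mkQ (B.J x) := fun x => rfl
  have hsur : ∀ x, ∃ y, I.mkQ y = x := fun x => I.mkQ_surjective x
  have lift_e : ∀ x, J x = x → ∃ y, B.J y = y ∧ I.mkQ y = x := by
    intro x hx
    obtain ⟨y, rfl⟩ := hsur x
    refine ⟨B.ev y, J_ev y, ?_⟩
    rw [ev, map_smul, map_add, ← hJm, hx, ← two_smul K (I.mkQ y), smul_smul, inv_mul_cancel₀ h2,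
      one_smul]
  have lift_o : ∀ x, J x = -x → ∃ y, B.J y = -y ∧ I.mkQ y = x := by
    intro x hx
    obtain ⟨y, rfl⟩ := hsur x
    refine ⟨B.od y, J_od y, ?_⟩
    rw [od, map_smul, map_sub, ← hJm, hx, sub_neg_eq_add, ← two_smul K (I.mkQ y), smul_smul,
      inv_mul_cancel₀ h2, one_smul]
  have lift_b : ∀ (a : Bool) x, J x = (if a then -x else x) →
      ∃ y, B.J y = (if a then -y else y) ∧ I.mkQ y = x := by
    intro a x
    cases a
    · simpa using lift_e x
    · simpa using lift_o x
  { carrier := B.carrier ⧸ I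
    J := J
    br := br
    J_inv := by
      intro x
      obtain ⟨x, rfl⟩ := hsur x
      rw [hJm, hJm, B.J_inv]
    J_br := by
      intro x y
      obtain ⟨x, rfl⟩ := hsur x
      obtain ⟨y, rfl⟩ := hsur y
      rw [hbr, hJm, hJm, hJm, hbr, B.J_br]
    skew_e := by
      intro x y hx
      obtain ⟨x, hx', rfl⟩ := lift_e x hx
      obtain ⟨y, rfl⟩ := hsur y
      rw [hbr, hbr, B.skew_e x y hx', map_neg]
    skew_o := by
      intro x y hx hy
      obtain ⟨x, hx', rfl⟩ := lift_o x hx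
      obtain ⟨y, hy', rfl⟩ := lift_o y hy
      rw [hbr, hbr, B.skew_o x y hx' hy']
    jacobi := by
      intro a b c x y z hx hy hz
      obtain ⟨x, hx', rfl⟩ := lift_b a x hx
      obtain ⟨y, hy', rfl⟩ := lift_b b y hy
      obtain ⟨z, hz', rfl⟩ := lift_b c z hz
      have := congrArg I.mkQ (B.jacobi a b c x y z hx' hy' hz')
      rw [map_add, map_add, map_smul I.mkQ, map_smul I.mkQ, map_smul I.mkQ, map_zero] at this
      exact this }

lemma exists_quot (h2 : (2 : K) ≠ 0) (B : SuperLie K) (I : Submodule K B.carrier)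
    (hJ : ∀ x ∈ I, B.J x ∈ I)
    (hl : ∀ x ∈ I, ∀ y, B.br x y ∈ I) (hr : ∀ x ∈ I, ∀ y, B.br y x ∈ I) :
    ∃ (C : SuperLie K) (g : Hom B C), Surjective g.toLin ∧ LinearMap.ker g.toLin = I :=
  ⟨quot h2 B I hJ hl hr, ⟨I.mkQ, fun _ => rfl, fun _ _ => rfl⟩, I.mkQ_surjective, I.ker_mkQ⟩


lemma span_basis_coe {V ι : Type} [AddCommGroup V] [Module K V] (S : Submodule K V)
    (b : Basis ι K S) : Submodule.span K (Set.range fun i => (b i : V)) = S := by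
  have : (Set.range fun i => (b i : V)) = S.subtype '' Set.range b := by
    rw [← Set.range_comp]; rfl
  rw [this, Submodule.span_image, b.span_eq, Submodule.map_top, Submodule.range_subtype]

/-- Index type for the super exterior square. -/
abbrev PP (ι : Type) [LinearOrder ι] (o : ι → Prop) : Type :=
  {p : ι × ι // p.1 < p.2 ∨ (p.1 = p.2 ∧ o p.1)}

open Classical in
lemma card_PP (ι : Type) [LinearOrder ι] [Fintype ι] (o : ι → Prop) :
    2 * Nat.card (PP ι o) + Nat.card ι =
      Nat.card ι * Nat.card ι + 2 * Nat.card {i // o i} := by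
  simp only [Nat.card_eq_fintype_card]
  have e : Fintype.card (PP ι o) =
      Fintype.card {p : ι × ι // p.1 < p.2} + Fintype.card {i // o i} := by
    rw [← Fintype.card_sum]
    refine Fintype.card_congr ((subtypeOrEquiv _ _ ?_).trans (Equiv.sumCongr (Equiv.refl _) ?_))
    · rw [Pi.disjoint_iff]
      rintro ⟨i, j⟩
      simp only [Prop.disjoint_iff]
      rintro ⟨h, h', -⟩
      exact h.ne h'
    · exact
      { toFun := fun p => ⟨p.1.1, p.2.2⟩
        invFun := fun i => ⟨(i.1, i.1), rfl, i.2⟩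
        left_inv := by rintro ⟨⟨i, j⟩, h, h'⟩; simp at h; subst h; rfl
        right_inv := by rintro ⟨i, h⟩; rfl }
  have e2 : Fintype.card {p : ι × ι // p.1 < p.2} = Fintype.card {p : ι × ι // p.2 < p.1} :=
    Fintype.card_congr
      { toFun := fun p => ⟨(p.1.2, p.1.1), p.2⟩
        invFun := fun p => ⟨(p.1.2, p.1.1), p.2⟩
        left_inv := fun _ => rfl
        right_inv := fun _ => rfl }
  have e3 : Fintype.card {p : ι × ι // ¬ (p.1 < p.2)} =
      Fintype.card {p : ι × ι // p.2 < p.1} + Fintype.card ι := by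
    rw [← Fintype.card_sum]
    have : ∀ p : ι × ι, ¬ (p.1 < p.2) ↔ (p.2 < p.1 ∨ p.1 = p.2) := by
      intro p; rw [not_lt, le_iff_lt_or_eq, eq_comm]
    refine Fintype.card_congr ((Equiv.subtypeEquivRight this).trans
      ((subtypeOrEquiv _ _ ?_).trans (Equiv.sumCongr (Equiv.refl _) ?_)))
    · rw [Pi.disjoint_iff]
      rintro ⟨i, j⟩
      simp only [Prop.disjoint_iff]
      rintro ⟨h, h'⟩
      exact h.ne h'.symm
    · exact
      { toFun := fun p => p.1.1
        invFun := fun i => ⟨(i, i), rfl⟩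
        left_inv := by rintro ⟨⟨i, j⟩, h⟩; simp at h; subst h; rfl
        right_inv := fun _ => rfl }
  have e4 := Fintype.card_subtype_compl (fun p : ι × ι => p.1 < p.2)
  have e5 := Fintype.card_subtype_le (fun p : ι × ι => p.1 < p.2)
  rw [Fintype.card_prod] at e4 e5
  omega

open Classical in
/-- Base case: `B/Q` abelian with `Q = B'` central. -/
lemma base_bound (h2 : (2 : K) ≠ 0) (B : SuperLie K) [FiniteDimensional K B.carrier]
    (Q : Submodule K B.carrier) (hJ : ∀ x ∈ Q, B.J x ∈ Q) (hc : Q ≤ B.center)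
    (N n : ℕ) (hN : finrank K B.carrier = finrank K Q + N)
    (hn : finrank K B.oddPart = finrank K ↥(Q ⊓ B.oddPart) + n) :
    2 * finrank K B.derived + N ≤ N * N + 2 * n := by
  obtain ⟨E, hE, hEs, hEi⟩ := exists_rel_compl (Q ⊓ B.evenPart) B.evenPart inf_le_right
  obtain ⟨O, hO, hOs, hOi⟩ := exists_rel_compl (Q ⊓ B.oddPart) B.oddPart inf_le_right
  have dE := Submodule.finrank_sup_add_finrank_inf_eq (Q ⊓ B.evenPart) E
  have dO := Submodule.finrank_sup_add_finrank_inf_eq (Q ⊓ B.oddPart) O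
  rw [hEs, hEi, finrank_bot] at dE
  rw [hOs, hOi, finrank_bot] at dO
  have dB := finrank_even_odd h2 B
  have dQ := finrank_graded h2 hJ
  let bE := finBasis K E
  let bO := finBasis K O
  let ι := Fin (finrank K E) ⊕ₗ Fin (finrank K O)
  let w : ι → B.carrier := fun i => Sum.elim (fun i => (bE i : B.carrier)) (fun j => (bO j : B.carrier)) (ofLex i)
  let o : ι → Prop := fun i => (ofLex i).isRight
  have ho : ∀ i, o i → B.J (w i) = - w i := by
    intro i hi
    rcases i with i | i
    · exact absurd hi Bool.false_ne_true
    · exact mem_odd.1 (hO (bO i).2)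
  have he : ∀ i, ¬ o i → B.J (w i) = w i := by
    intro i hi
    rcases i with i | i
    · exact mem_even.1 (hE (bE i).2)
    · exact absurd rfl hi
  have hh : ∀ i, Hmg B (w i) := by
    intro i
    by_cases hi : o i
    · exact Or.inr (ho i hi)
    · exact Or.inl (he i hi)
  have cι : Nat.card ι = N := by
    have : Nat.card ι = finrank K E + finrank K O := by
      simp only [ι, Lex]
      rw [Nat.card_sum, Nat.card_fin, Nat.card_fin]
    omega
  have co : Nat.card {i // o i} = n := by
    have : Nat.card {i // o i} = finrank K O := by
      rw [← Nat.card_fin (finrank K O)]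
      refine Nat.card_congr
        { toFun := fun i => (ofLex i.1).getRight i.2
          invFun := fun j => ⟨toLex (Sum.inr j), rfl⟩
          left_inv := ?_
          right_inv := fun _ => rfl }
      rintro ⟨i, hi⟩
      apply Subtype.ext
      change toLex (Sum.inr ((ofLex i).getRight hi)) = i
      rw [Sum.inr_getRight]; rfl
    omega
  have cP := card_PP ι o
  rw [cι, co] at cP
  -- spanning
  have hspan : Submodule.span K (Set.range w ∪ (Q : Set B.carrier)) = ⊤ := by
    rw [eq_top_iff]
    intro x _
    rw [Submodule.span_union, Submodule.span_eq]
    have hEw : E ≤ Submodule.span K (Set.range w) := by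
      conv_lhs => rw [← span_basis_coe E bE]
      refine Submodule.span_mono ?_
      rintro _ ⟨i, rfl⟩
      exact ⟨toLex (Sum.inl i), rfl⟩
    have hOw : O ≤ Submodule.span K (Set.range w) := by
      conv_lhs => rw [← span_basis_coe O bO]
      refine Submodule.span_mono ?_
      rintro _ ⟨i, rfl⟩
      exact ⟨toLex (Sum.inr i), rfl⟩
    rw [← ev_add_od h2 x]
    refine Submodule.add_mem _ ?_ ?_
    · have : B.ev x ∈ B.evenPart := mem_even.2 (J_ev x)
      rw [← hEs] at this
      exact (sup_le (le_sup_of_le_right inf_le_left) (le_sup_of_le_left hEw) : _ ≤ _) this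
    · have : B.od x ∈ B.oddPart := mem_odd.2 (J_od x)
      rw [← hOs] at this
      exact (sup_le (le_sup_of_le_right inf_le_left) (le_sup_of_le_left hOw) : _ ≤ _) this
  let F : PP ι o → B.carrier := fun p => B.br (w p.1.1) (w p.1.2)
  have hder : B.derived ≤ Submodule.span K (Set.range F) := by
    have h1 : B.derived ≤ Submodule.map₂ B.br ⊤ ⊤ := by
      refine Submodule.span_le.2 ?_
      rintro _ ⟨x, y, rfl⟩
      exact Submodule.apply_mem_map₂ _ trivial trivial
    refine h1.trans ?_
    rw [← hspan, Submodule.map₂_span_span, Submodule.span_le]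
    rintro _ ⟨x, hx, y, hy, rfl⟩
    rcases hx with ⟨i, rfl⟩ | hx
    swap
    · dsimp only
      rw [mem_center.1 (hc hx)]; exact Submodule.zero_mem _
    rcases hy with ⟨j, rfl⟩ | hy
    swap
    · dsimp only
      rw [br_center h2 (hc hy)]; exact Submodule.zero_mem _
    dsimp only
    rcases lt_trichotomy i j with h | h | h
    · exact Submodule.subset_span ⟨⟨(i, j), Or.inl h⟩, rfl⟩
    · subst h
      by_cases hi : o i
      · exact Submodule.subset_span ⟨⟨(i, i), Or.inr ⟨rfl, hi⟩⟩, rfl⟩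
      · rw [eq_zero_of_eq_neg h2 (B.skew_e (w i) (w i) (he i hi))]
        exact Submodule.zero_mem _
    · obtain ⟨c, -, hcc⟩ := (hh i).skew (hh j)
      rw [hcc]
      exact Submodule.smul_mem _ _ (Submodule.subset_span ⟨⟨(j, i), Or.inl h⟩, rfl⟩)
  have := (Submodule.finrank_mono hder).trans (finrank_range_le_card F)
  rw [← Nat.card_eq_fintype_card] at this
  omega


/-- the setting: `Q` a graded central ideal inside `B'`, with `B/Q` nilpotent. -/
structure Stem (B : SuperLie K) (Q : Submodule K B.carrier) : Prop where
  J : ∀ x ∈ Q, B.J x ∈ Q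
  cen : Q ≤ B.center
  der : Q ≤ B.derived
  nil : ∃ k, B.lcs k ≤ Q

lemma Stem.exists_z (h2 : (2 : K) ≠ 0) {Q : Submodule K B.carrier} (h : Stem B Q)
    (hR : ¬ B.derived ≤ Q) :
    ∃ z, Hmg B z ∧ z ∈ B.derived ∧ z ∉ Q ∧ ∀ y, B.br z y ∈ Q := by
  classical
  obtain ⟨hk⟩ : Nonempty (∃ k, B.lcs k ≤ Q) := ⟨h.nil⟩
  have hk1 : Nat.find hk ≠ 0 := by
    intro h0
    have := Nat.find_spec hk
    rw [h0] at this
    exact hR (le_trans le_top this)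
  obtain ⟨k, hk2⟩ := Nat.exists_eq_succ_of_ne_zero hk1
  have hk3 : B.lcs (k+1) ≤ Q := by
    have := Nat.find_spec hk
    rwa [hk2] at this
  have hk4 : ¬ B.lcs k ≤ Q := Nat.find_min hk (by omega)
  have hk5 : k ≠ 0 := by
    rintro rfl
    exact hR (lcs_one (A := B) ▸ hk3)
  obtain ⟨j, rfl⟩ := Nat.exists_eq_succ_of_ne_zero hk5
  obtain ⟨z, hz, hzQ⟩ := SetLike.not_le_iff_exists.1 hk4
  have key : ∀ z, Hmg B z → z ∈ B.lcs (j+1) → z ∉ Q →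
      ∃ z, Hmg B z ∧ z ∈ B.derived ∧ z ∉ Q ∧ ∀ y, B.br z y ∈ Q := fun z h1 h2 h3 =>
    ⟨z, h1, lcs_succ_le_derived _ h2, h3, fun y => hk3 (br_mem_lcs h2 y)⟩
  by_cases he : B.ev z ∈ Q
  · by_cases ho : B.od z ∈ Q
    · exact absurd (ev_add_od h2 z ▸ Q.add_mem he ho) hzQ
    · exact key _ (hmg_od z) (od_mem (J_lcs _) hz) ho
  · exact key _ (hmg_ev z) (ev_mem (J_lcs _) hz) he

/-- `z` brackets trivially with `B'`. -/
lemma Stem.br_derived (h2 : (2 : K) ≠ 0) {Q : Submodule K B.carrier} (h : Stem B Q)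
    {z : B.carrier} (hz : Hmg B z) (hzQ : ∀ y, B.br z y ∈ Q) :
    B.derived ≤ LinearMap.ker (B.br z) := by
  refine derived_le_of_hmg h2 fun x y hx hy => ?_
  rw [LinearMap.mem_ker]
  obtain ⟨c₁, c₂, c₃, h1, -, -, hj⟩ := hz.jac hx hy
  have e1 : B.br x (B.br y z) = 0 := by
    obtain ⟨c, -, hc⟩ := hy.skew hz
    rw [hc, map_smul, br_center h2 (h.cen (hzQ y)), smul_zero]
  have e2 : B.br y (B.br z x) = 0 := br_center h2 (h.cen (hzQ x)) y
  rw [e1, e2, smul_zero, smul_zero, add_zero, add_zero] at hj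
  exact (smul_eq_zero.1 hj).resolve_left h1

lemma finrank_sup_singleton {V : Type} [AddCommGroup V] [Module K V] [FiniteDimensional K V]
    (Q : Submodule K V) {z : V} (hz : z ∉ Q) :
    finrank K ↥(Q ⊔ K ∙ z) = finrank K Q + 1 := by
  have h := Submodule.finrank_sup_add_finrank_inf_eq Q (K ∙ z)
  have hz0 : z ≠ 0 := by rintro rfl; exact hz Q.zero_mem
  rw [finrank_span_singleton hz0] at h
  have : Q ⊓ (K ∙ z) = ⊥ := by
    rw [← disjoint_iff, Submodule.disjoint_span_singleton' hz0]
    exact hz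
  rw [this, finrank_bot] at h
  exact h

/-- The reduction step. -/
lemma Stem.step (h2 : (2 : K) ≠ 0) [FiniteDimensional K B.carrier]
    {Q : Submodule K B.carrier} (h : Stem B Q)
    {z : B.carrier} (hz : Hmg B z) (hzd : z ∈ B.derived) (hzn : z ∉ Q) (hzQ : ∀ y, B.br z y ∈ Q) :
    ∃ (C : SuperLie K) (S : Submodule K C.carrier), FiniteDimensional K C.carrier ∧ Stem C S ∧
      finrank K C.carrier + finrank K (LinearMap.range (B.br z)) = finrank K B.carrier ∧
      finrank K S + finrank K (LinearMap.range (B.br z)) = finrank K Q + 1 ∧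
      finrank K C.derived + finrank K (LinearMap.range (B.br z)) = finrank K B.derived ∧
      finrank K C.oddPart + finrank K ↥(Q ⊓ B.oddPart)
        ≤ finrank K ↥(S ⊓ C.oddPart) + finrank K B.oddPart ∧
      (B.J z = -z → finrank K C.oddPart + finrank K ↥(Q ⊓ B.oddPart) + 1
        ≤ finrank K ↥(S ⊓ C.oddPart) + finrank K B.oddPart) := by
  set I := LinearMap.range (B.br z) with hI
  have hIQ : I ≤ Q := by rintro _ ⟨y, rfl⟩; exact hzQ y
  have hIJ : ∀ x ∈ I, B.J x ∈ I := by
    rintro _ ⟨y, rfl⟩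
    rw [B.J_br]
    rcases hz with hz | hz
    · rw [hz]; exact ⟨_, rfl⟩
    · rw [hz]; exact ⟨-B.J y, by simp⟩
  obtain ⟨C, g, hg, hgk⟩ := exists_quot h2 B I hIJ
    (fun x hx y => by rw [mem_center.1 (h.cen (hIQ hx))]; exact I.zero_mem)
    (fun x hx y => by rw [br_center h2 (h.cen (hIQ hx))]; exact I.zero_mem)
  have hCfd : FiniteDimensional K C.carrier := Module.Finite.of_surjective g.toLin hg
  set T := Q ⊔ K ∙ z with hT
  have hIT : I ≤ T := hIQ.trans le_sup_left
  have hzT : z ∈ T := Submodule.mem_sup_right (Submodule.mem_span_singleton_self z)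
  have hTd : T ≤ B.derived := sup_le h.der (by simpa using hzd)
  have hTJ : T ≤ T.comap B.J := by
    refine sup_le (fun x hx => Submodule.mem_sup_left (h.J x hx)) ?_
    rw [Submodule.span_singleton_le_iff_mem, Submodule.mem_comap]
    rcases hz with hz | hz
    · rw [hz]; exact hzT
    · rw [hz]; exact T.neg_mem hzT
  have hTI : ∀ x ∈ T, ∀ y, B.br x y ∈ I := by
    intro x hx y
    have : T ≤ I.comap (B.br.flip y) := by
      refine sup_le ?_ ?_
      · intro x hx
        simp [mem_center.1 (h.cen hx)]
      · rw [Submodule.span_singleton_le_iff_mem, Submodule.mem_comap]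
        exact ⟨y, rfl⟩
    exact this hx
  have d1 := finrank_map_add g.toLin ⊤
  have d2 := finrank_map_add g.toLin T
  have d3 := finrank_map_add g.toLin B.derived
  have d4 := finrank_map_add g.toLin B.oddPart
  have d5 := finrank_map_add g.toLin (T ⊓ B.oddPart)
  rw [Submodule.map_top, LinearMap.range_eq_top.2 hg, top_inf_eq, hgk, finrank_top, finrank_top] at d1
  rw [hgk, inf_eq_right.2 hIT, finrank_sup_singleton Q hzn] at d2
  rw [hgk, inf_eq_right.2 (hIT.trans hTd), map_derived g hg] at d3
  rw [hgk, map_oddPart h2 g hg] at d4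
  rw [hgk, inf_assoc, inf_eq_right.2 (inf_le_right.trans hIT)] at d5
  have d6 : finrank K ↥((T ⊓ B.oddPart).map g.toLin) ≤ finrank K ↥(T.map g.toLin ⊓ C.oddPart) := by
    apply Submodule.finrank_mono
    refine (Submodule.map_inf_le _).trans ?_
    rw [map_oddPart h2 g hg]
  refine ⟨C, T.map g.toLin, hCfd, ⟨?_, ?_, ?_, ?_⟩, d1, d2, d3, ?_, ?_⟩
  · rintro _ ⟨x, hx, rfl⟩
    rw [← g.map_J]
    exact Submodule.mem_map_of_mem (hTJ hx)
  · rintro _ ⟨x, hx, rfl⟩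
    rw [mem_center]
    intro y
    obtain ⟨y, rfl⟩ := hg y
    rw [← g.map_br, ← LinearMap.mem_ker, hgk]
    exact hTI x hx y
  · rw [← map_derived g hg]
    exact Submodule.map_mono hTd
  · obtain ⟨k, hk⟩ := h.nil
    refine ⟨k, ?_⟩
    rw [← map_lcs g hg]
    exact Submodule.map_mono (hk.trans le_sup_left)
  · have d7 : finrank K ↥(Q ⊓ B.oddPart) ≤ finrank K ↥(T ⊓ B.oddPart) :=
      Submodule.finrank_mono (inf_le_inf_right _ le_sup_left)
    omega
  · intro hzo
    have d7 : finrank K ↥(Q ⊓ B.oddPart) < finrank K ↥(T ⊓ B.oddPart) := by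
      apply Submodule.finrank_lt_finrank_of_lt
      refine lt_of_le_of_ne (inf_le_inf_right _ le_sup_left) ?_
      intro he
      have : z ∈ T ⊓ B.oddPart := ⟨hzT, mem_odd.2 hzo⟩
      rw [← he] at this
      exact hzn this.1
    omega

/-- When `B' = Q + ⟨z⟩`, the range of `br z` is spanned by `[z,x], [z,y]`
whenever `[x,y] ∉ Q`. -/
lemma Stem.range_le (h2 : (2 : K) ≠ 0)
    {Q : Submodule K B.carrier} (h : Stem B Q)
    {z : B.carrier} (hz : Hmg B z)
    (hd : B.derived ≤ Q ⊔ K ∙ z) {x y : B.carrier} (hx : Hmg B x) (hy : Hmg B y)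
    (hxy : B.br x y ∉ Q) :
    LinearMap.range (B.br z) ≤ Submodule.span K {B.br z x, B.br z y} := by
  have key : ∀ u w, Hmg B u → w ∈ B.derived → ∃ c : K, B.br u w = c • B.br z u := by
    intro u w hu hw
    obtain ⟨q, hq, t, ht, rfl⟩ := Submodule.mem_sup.1 (hd hw)
    obtain ⟨c, rfl⟩ := Submodule.mem_span_singleton.1 ht
    obtain ⟨c', -, hc'⟩ := hu.skew hz
    refine ⟨c * c', ?_⟩
    rw [map_add, br_center h2 (h.cen hq), zero_add, map_smul, hc', smul_smul]
  obtain ⟨q, hq, t, ht, hqt⟩ := Submodule.mem_sup.1 (hd (br_mem_derived x y))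
  obtain ⟨c, rfl⟩ := Submodule.mem_span_singleton.1 ht
  have hc : c ≠ 0 := by
    rintro rfl
    rw [zero_smul, add_zero] at hqt
    exact hxy (hqt ▸ hq)
  have main : ∀ v, Hmg B v → B.br z v ∈ Submodule.span K {B.br z x, B.br z y} := by
    intro v hv
    obtain ⟨c₁, c₂, c₃, h1, -, -, hj⟩ := hv.jac hx hy
    obtain ⟨a, ha⟩ := key x _ hx (br_mem_derived y v)
    obtain ⟨b, hb⟩ := key y _ hy (br_mem_derived v x)
    obtain ⟨d, hd0, hd⟩ := hv.skew hz
    rw [ha, hb, ← hqt, map_add, br_center h2 (h.cen hq), zero_add, map_smul, hd] at hj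
    simp only [smul_smul] at hj
    rw [Submodule.mem_span_pair]
    have hne : c₁ * (c * d) ≠ 0 := mul_ne_zero h1 (mul_ne_zero hc hd0)
    refine ⟨-(c₁ * (c * d))⁻¹ * (c₂ * a), -(c₁ * (c * d))⁻¹ * (c₃ * b), ?_⟩
    have e : (c₁ * (c * d)) • B.br z v = -((c₂ * a) • B.br z x + (c₃ * b) • B.br z y) := by
      rw [eq_neg_iff_add_eq_zero, ← add_assoc]; exact hj
    rw [mul_smul _ (c₂ * a), mul_smul _ (c₃ * b), ← smul_add, neg_smul, ← smul_neg, ← e, smul_smul,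
      inv_mul_cancel₀ hne, one_smul]
  rintro _ ⟨v, rfl⟩
  rw [← ev_add_od h2 v, map_add]
  exact Submodule.add_mem _ (main _ (hmg_ev v)) (main _ (hmg_od v))

lemma finrank_span_pair_le {V : Type} [AddCommGroup V] [Module K V] (x y : V) :
    finrank K (Submodule.span K {x, y}) ≤ 2 := by
  classical
  have := finrank_span_finset_le_card (R := K) ({x, y} : Finset V)
  rw [Finset.coe_pair] at this
  exact this.trans Finset.card_le_two

/-- For `R = 1`, the range of `br z` has dimension at most two. -/
lemma Stem.range_le_two (h2 : (2 : K) ≠ 0) [FiniteDimensional K B.carrier]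
    {Q : Submodule K B.carrier} (h : Stem B Q)
    {z : B.carrier} (hz : Hmg B z)
    (hd : B.derived ≤ Q ⊔ K ∙ z) (hR : ¬ B.derived ≤ Q) :
    finrank K (LinearMap.range (B.br z)) ≤ 2 := by
  have : ∃ x y, Hmg B x ∧ Hmg B y ∧ B.br x y ∉ Q := by
    by_contra! hcon
    exact hR (derived_le_of_hmg h2 fun x y hx hy => hcon x y hx hy)
  obtain ⟨x, y, hx, hy, hxy⟩ := this
  exact (Submodule.finrank_mono (h.range_le h2 hz hd hx hy hxy)).trans (finrank_span_pair_le _ _)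

lemma Stem.derived_le {Q : Submodule K B.carrier} [FiniteDimensional K B.carrier] (h : Stem B Q)
    {z : B.carrier} (hzd : z ∈ B.derived) (hzn : z ∉ Q)
    (hR : finrank K B.derived = finrank K Q + 1) : B.derived ≤ Q ⊔ K ∙ z := by
  have h1 : Q ⊔ K ∙ z ≤ B.derived := sup_le h.der (by simpa using hzd)
  refine (Submodule.eq_of_le_of_finrank_eq h1 ?_).ge
  rw [finrank_sup_singleton Q hzn, hR]

/-- The case `R = 1`. -/
lemma Stem.bound_one (h2 : (2 : K) ≠ 0) [FiniteDimensional K B.carrier]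
    {Q : Submodule K B.carrier} (h : Stem B Q)
    (N n : ℕ) (hN : finrank K B.carrier = finrank K Q + N)
    (hn : finrank K B.oddPart = finrank K ↥(Q ⊓ B.oddPart) + n)
    (hR : finrank K B.derived = finrank K Q + 1) :
    2 * (finrank K Q : ℤ) ≤ ((N : ℤ) - 1) * (N - 2) + 2 * n + 2 ∧
    (2 * (finrank K Q : ℤ) = ((N : ℤ) - 1) * (N - 2) + 2 * n + 2 →
      ∃ z, B.J z = z ∧ z ∈ B.derived ∧ z ∉ Q ∧ (∀ y, B.br z y ∈ Q) ∧
        finrank K (LinearMap.range (B.br z)) = 2) := by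
  have hR' : ¬ B.derived ≤ Q := by
    intro hle
    have := Submodule.finrank_mono hle
    omega
  obtain ⟨z, hz, hzd, hzn, hzQ⟩ := h.exists_z h2 hR'
  have hi := h.range_le_two h2 hz (h.derived_le hzd hzn hR) hR'
  obtain ⟨C, S, hfd, hS, d1, d2, d3, d4, d5⟩ := h.step h2 hz hzd hzn hzQ
  have hsle : finrank K ↥(S ⊓ C.oddPart) ≤ finrank K C.oddPart := Submodule.finrank_mono inf_le_right
  have hSle : finrank K S ≤ finrank K C.carrier := Submodule.finrank_le S
  obtain ⟨n', hn'⟩ := Nat.exists_eq_add_of_le hsle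
  obtain ⟨N', hN'⟩ := Nat.exists_eq_add_of_le hSle
  have hb := base_bound h2 C S hS.J hS.cen N' n' hN' hn'
  have hNN : N = N' + 1 := by omega
  have hb' : 2 * (finrank K C.derived : ℤ) + N' ≤ N' * N' + 2 * n' := by exact_mod_cast hb
  have e1 : ((N : ℤ) - 1) * (N - 2) = N' * N' - N' := by rw [hNN]; push_cast; ring
  rw [e1]
  have hnn : n' ≤ n := by omega
  refine ⟨by omega, fun heq => ?_⟩
  rcases hz with hz | hz
  · exact ⟨z, hz, hzd, hzn, hzQ, by omega⟩
  · exfalso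
    have := d5 hz
    omega

lemma Stem.bound (h2 : (2 : K) ≠ 0) (R : ℕ) : ∀ (B : SuperLie K) (_ : FiniteDimensional K B.carrier)
    (Q : Submodule K B.carrier) (_ : Stem B Q)
    (N n : ℕ) (_ : finrank K B.carrier = finrank K Q + N)
    (_ : finrank K B.oddPart = finrank K ↥(Q ⊓ B.oddPart) + n)
    (_ : finrank K B.derived = finrank K Q + (R + 1)),
    2 * (finrank K Q : ℤ) ≤ ((N : ℤ) + (R + 1) - 2) * (N - (R + 1) - 1) + 2 * n + 2 := by
  induction R with
  | zero =>
    intro B hfd Q h N n hN hn hR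
    have := (h.bound_one h2 N n hN hn hR).1
    refine this.trans (le_of_eq ?_)
    push_cast; ring
  | succ R ih =>
    intro B hfd Q h N n hN hn hR
    have hR' : ¬ B.derived ≤ Q := by
      intro hle
      have := Submodule.finrank_mono hle
      omega
    obtain ⟨z, hz, hzd, hzn, hzQ⟩ := h.exists_z h2 hR'
    have hk := Submodule.finrank_mono (h.br_derived h2 hz hzQ)
    have hrk := LinearMap.finrank_range_add_finrank_ker (B.br z)
    obtain ⟨C, S, hfd, hS, d1, d2, d3, d4, -⟩ := h.step h2 hz hzd hzn hzQ
    have hsle : finrank K ↥(S ⊓ C.oddPart) ≤ finrank K C.oddPart := Submodule.finrank_mono inf_le_right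
    have hSle : finrank K S ≤ finrank K C.carrier := Submodule.finrank_le S
    obtain ⟨n', hn'⟩ := Nat.exists_eq_add_of_le hsle
    obtain ⟨N', hN'⟩ := Nat.exists_eq_add_of_le hSle
    have hb := ih C hfd S hS N' n' hN' hn' (by omega)
    have hNN : N = N' + 1 := by omega
    have hnn : n' ≤ n := by omega
    have hi : finrank K (LinearMap.range (B.br z)) + (R + 2) ≤ N := by omega
    have e : ((N : ℤ) + (((R + 1 : ℕ) : ℤ) + 1) - 2) * (N - (((R + 1 : ℕ) : ℤ) + 1) - 1)
        = ((N' : ℤ) + (R + 1) - 2) * (N' - (R + 1) - 1) + 2 * (N' - (R + 1) - 1) := by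
      rw [hNN]; push_cast; ring
    rw [e]
    omega


lemma ext_finite (h2 : (2 : K) ≠ 0) [FiniteDimensional K A.carrier] (f : Hom B A)
    (hf : Surjective f.toLin) (hk : LinearMap.ker f.toLin ≤ B.center ⊓ B.derived) :
    FiniteDimensional K B.carrier := by
  obtain ⟨s, hs⟩ := f.toLin.exists_rightInverse_of_surjective (LinearMap.range_eq_top.2 hf)
  have hs' : ∀ a, f.toLin (s a) = a := fun a => LinearMap.congr_fun hs a
  have hsk : ∀ b, b - s (f.toLin b) ∈ B.center := by
    intro b
    refine (hk ?_).1
    rw [LinearMap.mem_ker, map_sub, hs', sub_self]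
  have hder : B.derived ≤ Submodule.map₂ B.br (LinearMap.range s) (LinearMap.range s) := by
    refine Submodule.span_le.2 ?_
    rintro _ ⟨x, y, rfl⟩
    have e : B.br x y = B.br (s (f.toLin x)) (s (f.toLin y)) := by
      have e1 := mem_center.1 (hsk x) y
      have e2 := br_center h2 (hsk y) (s (f.toLin x))
      rw [map_sub, LinearMap.sub_apply, sub_eq_zero] at e1
      rw [map_sub, sub_eq_zero] at e2
      rw [e1, e2]
    rw [e]
    exact Submodule.apply_mem_map₂ _ ⟨_, rfl⟩ ⟨_, rfl⟩
  have hfg : (LinearMap.range s).FG := by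
    rw [LinearMap.range_eq_map]
    exact Submodule.FG.map _ Module.Finite.fg_top
  have hfg2 := Submodule.FG.map₂ B.br hfg hfg
  have : FiniteDimensional K ↥(Submodule.map₂ B.br (LinearMap.range s) (LinearMap.range s)) :=
    Module.Finite.of_fg hfg2
  have hker : FiniteDimensional K (LinearMap.ker f.toLin) :=
    Submodule.finiteDimensional_of_le ((hk.trans inf_le_right).trans hder)
  have hT : (⊤ : Submodule K B.carrier) ≤ LinearMap.ker f.toLin ⊔ LinearMap.range s := by
    intro b _
    have : b = (b - s (f.toLin b)) + s (f.toLin b) := by abel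
    rw [this]
    refine Submodule.add_mem_sup ?_ ⟨_, rfl⟩
    rw [LinearMap.mem_ker, map_sub, hs', sub_self]
  have hTop : FiniteDimensional K (⊤ : Submodule K B.carrier) :=
    Submodule.finiteDimensional_of_le hT
  exact Module.Finite.equiv (Submodule.topEquiv (R := K) (M := B.carrier))

lemma ext_stem (hnil : A.IsNilpotent) (f : Hom B A)
    (hf : Surjective f.toLin) (hk : LinearMap.ker f.toLin ≤ B.center ⊓ B.derived) :
    Stem B (LinearMap.ker f.toLin) := by
  refine ⟨?_, hk.trans inf_le_left, hk.trans inf_le_right, ?_⟩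
  · intro x hx
    rw [LinearMap.mem_ker] at hx ⊢
    rw [f.map_J, hx, map_zero]
  · obtain ⟨k, hk⟩ := hnil
    refine ⟨k, ?_⟩
    rw [← map_lcs f hf] at hk
    exact LinearMap.le_ker_iff_map.2 hk

lemma ext_dims (h2 : (2 : K) ≠ 0) [FiniteDimensional K B.carrier] (f : Hom B A)
    (hf : Surjective f.toLin) (hk : LinearMap.ker f.toLin ≤ B.derived) :
    finrank K B.carrier = finrank K (LinearMap.ker f.toLin) + finrank K A.carrier ∧
    finrank K B.oddPart = finrank K ↥(LinearMap.ker f.toLin ⊓ B.oddPart) + finrank K A.oddPart ∧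
    finrank K B.derived = finrank K (LinearMap.ker f.toLin) + finrank K A.derived := by
  have d1 := finrank_map_add f.toLin ⊤
  have d3 := finrank_map_add f.toLin B.derived
  have d4 := finrank_map_add f.toLin B.oddPart
  rw [Submodule.map_top, LinearMap.range_eq_top.2 hf, top_inf_eq, finrank_top, finrank_top] at d1
  rw [inf_eq_right.2 hk, map_derived f hf] at d3
  rw [map_oddPart h2 f hf, inf_comm] at d4
  omega

/-- Structure in the equality case. -/
lemma heis_of_eq (h2 : (2 : K) ≠ 0) [FiniteDimensional K A.carrier] [FiniteDimensional K B.carrier]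
    (f : Hom B A) (hf : Surjective f.toLin) (h : Stem B (LinearMap.ker f.toLin))
    (hR : finrank K B.derived = finrank K (LinearMap.ker f.toLin) + 1)
    {z : B.carrier} (hze : B.J z = z) (hzd : z ∈ B.derived) (hzn : z ∉ LinearMap.ker f.toLin)
    (hzQ : ∀ y, B.br z y ∈ LinearMap.ker f.toLin)
    (hi : finrank K (LinearMap.range (B.br z)) = 2) :
    ∃ a : ℕ, finrank K A.evenPart = a + 3 ∧ A.IsHeisEvenSum 1 0 a (finrank K A.oddPart) := by
  set Q := LinearMap.ker f.toLin with hQ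
  have hz : Hmg B z := Or.inl hze
  have hd := h.derived_le hzd hzn hR
  -- brackets outside Q
  have hX : ∀ u w, Hmg B u → Hmg B w → B.br u w ∉ Q → B.br z u ≠ 0 ∧ u ≠ w := by
    intro u w hu hw huw
    have hle := Submodule.finrank_mono (h.range_le h2 hz hd hu hw huw)
    rw [hi] at hle
    have hs : ∀ v : B.carrier, finrank K (K ∙ v) ≤ 1 := by
      intro v
      have := finrank_span_le_card (R := K) ({v} : Set B.carrier)
      simpa using this
    constructor
    · intro h0
      rw [h0, Submodule.span_insert_zero] at hle
      have := hs (B.br z w)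
      omega
    · rintro rfl
      rw [Set.pair_eq_singleton] at hle
      have := hs (B.br z u)
      omega
  have hoo : ∀ u w, B.J u = -u → B.J w = -w → B.br u w ∈ Q := by
    have hd : ∀ t, B.J t = -t → B.br t t ∈ Q := by
      intro t ht
      by_contra hcon
      exact (hX t t (Or.inr ht) (Or.inr ht) hcon).2 rfl
    intro u w hu hw
    have h1 := hd (u + w) (by rw [map_add, hu, hw, neg_add])
    have e : B.br u w = (2 : K)⁻¹ • (B.br (u + w) (u + w) - B.br u u - B.br w w) := by
      have : B.br (u + w) (u + w) - B.br u u - B.br w w = (2 : K) • B.br u w := by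
        simp only [map_add, LinearMap.add_apply]
        rw [B.skew_o w u hw hu, two_smul]; abel
      rw [this, smul_smul, inv_mul_cancel₀ h2, one_smul]
    rw [e]
    exact Q.smul_mem _ (Q.sub_mem (Q.sub_mem h1 (hd u hu)) (hd w hw))
  have heo : ∀ u w, B.J u = u → B.J w = -w → B.br u w ∈ Q := by
    intro u w hu hw
    obtain ⟨q, hq, t, ht, hqt⟩ := Submodule.mem_sup.1 (hd (br_mem_derived u w))
    obtain ⟨c, rfl⟩ := Submodule.mem_span_singleton.1 ht
    have hJ := B.J_br u w
    rw [hu, hw, map_neg, ← hqt, map_add, map_smul, hze] at hJ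
    have e : c • z = -((2 : K)⁻¹ • (q + B.J q)) := by
      have : (2 : K) • (c • z) = -(q + B.J q) := by
        rw [two_smul]
        have := eq_neg_iff_add_eq_zero.1 hJ
        rw [eq_neg_iff_add_eq_zero, ← this]; abel
      rw [← smul_neg, ← this, smul_smul, inv_mul_cancel₀ h2, one_smul]
    rw [← hqt]
    refine Q.add_mem hq ?_
    rw [e]
    exact Q.neg_mem (Q.smul_mem _ (Q.add_mem hq (h.J q hq)))
  have hoe : ∀ u w, B.J u = -u → Hmg B w → B.br u w ∈ Q := by
    intro u w hu hw
    rcases hw with hw | hw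
    · rw [← neg_neg (B.br u w), ← B.skew_e w u hw]
      exact Q.neg_mem (heo w u hw hu)
    · exact hoo u w hu hw
  -- the pair x, y
  have hxy : ∃ x y, B.J x = x ∧ B.J y = y ∧ B.br x y ∉ Q := by
    by_contra! hcon
    have : B.derived ≤ Q := by
      refine derived_le_of_hmg h2 fun x y hx hy => ?_
      rcases hx with hx | hx
      · rcases hy with hy | hy
        · exact hcon x y hx hy
        · exact heo x y hx hy
      · exact hoe x y hx hy
    exact hzn (this hzd)
  obtain ⟨x, y, hx, hy, hxy⟩ := hxy
  obtain ⟨q, hq, t, ht, hqt⟩ := Submodule.mem_sup.1 (hd (br_mem_derived x y))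
  obtain ⟨c, rfl⟩ := Submodule.mem_span_singleton.1 ht
  have hc : c ≠ 0 := by
    rintro rfl
    rw [zero_smul, add_zero] at hqt
    exact hxy (hqt ▸ hq)
  set ζ := f.toLin z with hζ
  have hζ0 : ζ ≠ 0 := hzn
  have hζe : A.J ζ = ζ := by rw [hζ, ← f.map_J, hze]
  have hζc : ζ ∈ A.center := by
    rw [mem_center]
    intro a
    obtain ⟨b, rfl⟩ := hf a
    rw [hζ, ← f.map_br]; exact hzQ b
  obtain ⟨γ, hγ⟩ : ∃ γ : A.carrier →ₗ[K] K, γ ζ = 1 := by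
    by_contra! hcon
    apply hζ0
    rw [← Module.forall_dual_apply_eq_zero_iff K]
    intro φ
    by_contra hφ
    apply hcon ((φ ζ)⁻¹ • φ)
    simp [hφ]
  have hAd : ∀ a b, A.br a b = γ (A.br a b) • ζ := by
    intro a b
    obtain ⟨a, rfl⟩ := hf a
    obtain ⟨b, rfl⟩ := hf b
    rw [← f.map_br]
    obtain ⟨q', hq', t', ht', hqt'⟩ := Submodule.mem_sup.1 (hd (br_mem_derived a b))
    obtain ⟨c', rfl⟩ := Submodule.mem_span_singleton.1 ht'
    have hq0 : f.toLin q' = 0 := hq'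
    rw [← hqt', map_add, hq0, zero_add, map_smul, map_smul, ← hζ, hγ, smul_eq_mul, mul_one]
  set X := f.toLin x with hXd
  set Y := c⁻¹ • f.toLin y with hYd
  have hXe : A.J X = X := by rw [hXd, ← f.map_J, hx]
  have hYe : A.J Y = Y := by rw [hYd, map_smul, ← f.map_J, hy]
  have hXY : A.br X Y = ζ := by
    have hq0 : f.toLin q = 0 := hq
    rw [hYd, map_smul, hXd, ← f.map_br, ← hqt, map_add, hq0, zero_add, map_smul, smul_smul,
      inv_mul_cancel₀ hc, one_smul]
  have hYX : A.br Y X = -ζ := by rw [A.skew_e Y X hYe, hXY]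
  have hXX : A.br X X = 0 := eq_zero_of_eq_neg h2 (A.skew_e X X hXe)
  have hYY : A.br Y Y = 0 := eq_zero_of_eq_neg h2 (A.skew_e Y Y hYe)
  have hXζ : A.br X ζ = 0 := br_center h2 hζc X
  have hYζ : A.br Y ζ = 0 := br_center h2 hζc Y
  have cen_of : ∀ u, (∀ w, Hmg B w → B.br u w ∈ Q) → f.toLin u ∈ A.center := by
    intro u hu
    rw [mem_center]
    intro a
    obtain ⟨w, rfl⟩ := hf a
    rw [← f.map_br, ← LinearMap.mem_ker, ← ev_add_od h2 w, map_add]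
    exact Q.add_mem (hu _ (hmg_ev w)) (hu _ (hmg_od w))
  have hodd : ∀ v, A.J v = -v → v ∈ A.center := by
    intro v hv
    obtain ⟨v', rfl⟩ := hf v
    rw [← od_of_odd h2 hv, ← map_od]
    exact cen_of _ fun w hw => hoe _ w (J_od v') hw
  have hrad : ∀ u, A.J u = u → A.br X u = 0 → A.br Y u = 0 → u ∈ A.center := by
    intro u hu hXu hYu
    obtain ⟨u', hu', rfl⟩ : ∃ u', B.J u' = u' ∧ f.toLin u' = u := by
      obtain ⟨u', rfl⟩ := hf u
      exact ⟨B.ev u', J_ev u', by rw [map_ev, ev_of_even h2 hu]⟩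
    have hu'' : Hmg B u' := Or.inl hu'
    have hxu : B.br x u' ∈ Q := by
      rw [hQ, LinearMap.mem_ker, f.map_br]; exact hXu
    have hyu : B.br y u' ∈ Q := by
      rw [hQ, LinearMap.mem_ker, f.map_br]
      rw [hYd, map_smul, LinearMap.smul_apply] at hYu
      exact (smul_eq_zero.1 hYu).resolve_left (inv_ne_zero hc)
    have hzu : B.br z u' = 0 := by
      obtain ⟨c₁, c₂, c₃, -, -, h3, hj⟩ :=
        Hmg.jac (A := B) (x := x) (y := y) (z := u') (Or.inl hx) (Or.inl hy) hu''
      rw [br_center h2 (h.cen hyu), B.skew_e u' x hu', map_neg, br_center h2 (h.cen hxu),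
        ← hqt, map_add, br_center h2 (h.cen hq), map_smul] at hj
      simp only [smul_zero, neg_zero, zero_add] at hj
      have := (smul_eq_zero.1 ((smul_eq_zero.1 hj).resolve_left h3)).resolve_left hc
      rw [B.skew_e z u' hze, this, neg_zero]
    refine cen_of _ fun w hw => ?_
    by_contra hcon
    exact (hX u' w hu'' hw hcon).1 hzu
  -- linear algebra
  let α : A.carrier →ₗ[K] K := γ ∘ₗ A.br X
  let β : A.carrier →ₗ[K] K := γ ∘ₗ A.br Y
  let Φ : A.carrier →ₗ[K] K × K × K := α.prod (β.prod γ)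
  have hΦ : ∀ a, Φ a = (γ (A.br X a), γ (A.br Y a), γ a) := fun a => rfl
  set U := A.evenPart ⊓ LinearMap.ker Φ with hU
  have hdecomp : ∀ e, A.J e = e → ∃ (p q r : K), ∃ u ∈ U, e = p • X + q • Y + r • ζ + u := by
    intro e he
    refine ⟨-γ (A.br Y e), γ (A.br X e),
      γ (e + γ (A.br Y e) • X - γ (A.br X e) • Y), _, ⟨?_, ?_⟩, (add_sub_cancel _ _).symm⟩
    · refine mem_even.2 ?_
      simp only [map_sub, map_add, map_smul, hXe, hYe, hζe, he]
    · refine LinearMap.mem_ker.2 ?_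
      rw [hΦ]
      simp only [map_sub, map_add, map_smul, hXX, hXY, hYX, hYY, hXζ, hYζ, hγ, smul_eq_mul, map_neg,
        map_zero, Prod.mk_eq_zero]
      refine ⟨by ring, by ring, by ring⟩
  have hdim : finrank K A.evenPart = finrank K U + 3 := by
    have h1 := finrank_map_add Φ A.evenPart
    have h3 : A.evenPart.map Φ = ⊤ := by
      rw [eq_top_iff]
      rintro ⟨p, q, r⟩ -
      refine ⟨(-q) • X + p • Y + (r - γ ((-q) • X + p • Y)) • ζ, mem_even.2 ?_, ?_⟩
      · simp only [map_add, map_smul, hXe, hYe, hζe]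
      · rw [hΦ]
        simp only [map_add, map_smul, hXX, hXY, hYX, hYY, hXζ, hYζ, hγ, smul_eq_mul, map_neg,
          map_zero, Prod.mk.injEq]
        refine ⟨by ring, by ring, by ring⟩
    rw [h3, finrank_top, ← hU] at h1
    have h4 : finrank K (K × K × K) = 3 := by simp
    omega
  let bU := finBasis K U
  let bO := finBasis K A.oddPart
  let xx : Fin (2 * 1) → A.carrier := ![X, Y]
  let yy : Fin 0 → A.carrier := Fin.elim0
  let fam := (Sum.elim xx (Sum.elim yy (Sum.elim (fun _ : Fin 1 => ζ)
    (Sum.elim (fun i => (bU i : A.carrier)) (fun j => (bO j : A.carrier))))))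
  have hspan : Submodule.span K (Set.range fam) = ⊤ := by
    rw [eq_top_iff]
    have hs : ∀ i, fam i ∈ Submodule.span K (Set.range fam) := fun i =>
      Submodule.subset_span ⟨i, rfl⟩
    have hUs : U ≤ Submodule.span K (Set.range fam) := by
      conv_lhs => rw [← span_basis_coe U bU]
      refine Submodule.span_le.2 ?_
      rintro _ ⟨i, rfl⟩
      exact hs (Sum.inr (Sum.inr (Sum.inr (Sum.inl i))))
    have hOs : A.oddPart ≤ Submodule.span K (Set.range fam) := by
      conv_lhs => rw [← span_basis_coe _ bO]
      refine Submodule.span_le.2 ?_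
      rintro _ ⟨i, rfl⟩
      exact hs (Sum.inr (Sum.inr (Sum.inr (Sum.inr i))))
    intro a _
    rw [← ev_add_od h2 a]
    refine Submodule.add_mem _ ?_ (hOs (mem_odd.2 (J_od a)))
    obtain ⟨p, q, r, u, hu, he⟩ := hdecomp _ (J_ev a)
    rw [he]
    refine Submodule.add_mem _ (Submodule.add_mem _ (Submodule.add_mem _ ?_ ?_) ?_) (hUs hu)
    · exact Submodule.smul_mem _ _ (hs (Sum.inl 0))
    · exact Submodule.smul_mem _ _ (hs (Sum.inl 1))
    · exact Submodule.smul_mem _ _ (hs (Sum.inr (Sum.inr (Sum.inl 0))))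
  refine ⟨finrank K U, hdim, xx, yy, ζ, fun i => bU i, fun j => bO j, ?_, fun j => j.elim0,
    mem_even.2 hζe, fun i => (bU i).2.1, fun j => (bO j).2, ?_, hspan, ?_, fun i => i.elim0,
    fun i j => j.elim0, hζc, ?_, fun j => hodd _ (mem_odd.1 (bO j).2)⟩
  · intro i
    change Fin 2 at i
    fin_cases i
    · exact mem_even.2 hXe
    · exact mem_even.2 hYe
  · refine linearIndependent_of_top_le_span_of_card_eq_finrank hspan.ge ?_
    have := finrank_even_odd h2 A
    simp only [Fintype.card_sum, Fintype.card_fin]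
    omega
  · intro i j
    change Fin 2 at i
    change Fin 2 at j
    fin_cases i <;> fin_cases j
    · simpa [xx] using hXX
    · simpa [xx] using hXY
    · simpa [xx] using hYX
    · simpa [xx] using hYY
  · intro i
    have hi1 := (bU i).2.1
    have hi2 := LinearMap.mem_ker.1 (bU i).2.2
    rw [hΦ, Prod.mk_eq_zero, Prod.mk_eq_zero] at hi2
    refine hrad _ (mem_even.1 hi1) ?_ ?_
    · rw [hAd, hi2.1, zero_smul]
    · rw [hAd, hi2.2.1, zero_smul]


section construction

variable {ι : Type} [LinearOrder ι] [Fintype ι] (o : ι → Prop)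

open Classical in
/-- sign of an index -/
noncomputable def sg (K : Type) [Field K] (o : ι → Prop) (i : ι) : K := if o i then -1 else 1

open Classical in
/-- Koszul sign of a pair -/
noncomputable def ep (K : Type) [Field K] (o : ι → Prop) (i j : ι) : K :=
  if o i ∧ o j then -1 else 1

/-- grading operator of the cover -/
noncomputable def covJ (K : Type) [Field K] (o : ι → Prop) :
    ((ι → K) × (PP ι o → K) × (K × K)) →ₗ[K] ((ι → K) × (PP ι o → K) × (K × K)) where
  toFun X := (fun i => sg K o i * X.1 i, fun p => sg K o p.1.1 * sg K o p.1.2 * X.2.1 p, X.2.2)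
  map_add' X Y := by
    ext <;> simp <;> ring
  map_smul' c X := by
    ext <;> simp <;> ring

/-- bracket of the cover -/
noncomputable def covbr (K : Type) [Field K] (o : ι → Prop) {i₀ i₁ : ι} (h : i₀ < i₁) :
    ((ι → K) × (PP ι o → K) × (K × K)) →ₗ[K] ((ι → K) × (PP ι o → K) × (K × K)) →ₗ[K]
      ((ι → K) × (PP ι o → K) × (K × K)) :=
  LinearMap.mk₂ K (fun X Y => (0,
      fun p => X.1 p.1.1 * Y.1 p.1.2 - ep K o p.1.1 p.1.2 * (X.1 p.1.2 * Y.1 p.1.1),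
      (X.2.1 ⟨(i₀, i₁), Or.inl h⟩ * Y.1 i₀ - Y.2.1 ⟨(i₀, i₁), Or.inl h⟩ * X.1 i₀,
       X.2.1 ⟨(i₀, i₁), Or.inl h⟩ * Y.1 i₁ - Y.2.1 ⟨(i₀, i₁), Or.inl h⟩ * X.1 i₁)))
    (by intro X X' Y; ext <;> simp <;> ring)
    (by intro c X Y; ext <;> simp <;> ring)
    (by intro X Y Y'; ext <;> simp <;> ring)
    (by intro c X Y; ext <;> simp <;> ring)

lemma covbr_apply {i₀ i₁ : ι} (h : i₀ < i₁) (X Y : (ι → K) × (PP ι o → K) × (K × K)) :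
    covbr K o h X Y = (0,
      fun p => X.1 p.1.1 * Y.1 p.1.2 - ep K o p.1.1 p.1.2 * (X.1 p.1.2 * Y.1 p.1.1),
      (X.2.1 ⟨(i₀, i₁), Or.inl h⟩ * Y.1 i₀ - Y.2.1 ⟨(i₀, i₁), Or.inl h⟩ * X.1 i₀,
       X.2.1 ⟨(i₀, i₁), Or.inl h⟩ * Y.1 i₁ - Y.2.1 ⟨(i₀, i₁), Or.inl h⟩ * X.1 i₁)) := rfl

lemma covJ_apply (X : (ι → K) × (PP ι o → K) × (K × K)) :
    covJ K o X = (fun i => sg K o i * X.1 i,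
      fun p => sg K o p.1.1 * sg K o p.1.2 * X.2.1 p, X.2.2) := rfl

lemma sg_sq (i : ι) : sg K o i * sg K o i = 1 := by
  unfold sg; split_ifs <;> simp

lemma sg_of {i : ι} (h : o i) : sg K o i = -1 := by simp [sg, h]
lemma sg_of_not {i : ι} (h : ¬ o i) : sg K o i = 1 := by simp [sg, h]

lemma scal_zero (h2 : (2 : K) ≠ 0) {x : K} (h : x = -x) : x = 0 := eq_zero_of_eq_neg h2 h

lemma cov_even (h2 : (2 : K) ≠ 0) {X : (ι → K) × (PP ι o → K) × (K × K)} (h : covJ K o X = X)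
    {i : ι} (hi : o i) : X.1 i = 0 := by
  have := congrFun (congrArg Prod.fst h) i
  simp only [covJ_apply, sg_of o hi] at this
  rw [neg_one_mul] at this
  exact scal_zero h2 this.symm

lemma cov_odd (h2 : (2 : K) ≠ 0) {X : (ι → K) × (PP ι o → K) × (K × K)} (h : covJ K o X = -X)
    {i : ι} (hi : ¬ o i) : X.1 i = 0 := by
  have := congrFun (congrArg Prod.fst h) i
  simp only [covJ_apply, sg_of_not o hi, one_mul] at this
  exact scal_zero h2 this

lemma cov_odd' (h2 : (2 : K) ≠ 0) {X : (ι → K) × (PP ι o → K) × (K × K)} (h : covJ K o X = -X)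
    {p : PP ι o} (hi : ¬ o p.1.1) (hj : ¬ o p.1.2) : X.2.1 p = 0 := by
  have := congrFun (congrArg (fun X => X.2.1) h) p
  simp only [covJ_apply, sg_of_not o hi, sg_of_not o hj, one_mul] at this
  exact scal_zero h2 this

/-- The cover of `H(1,0) ⊕ A`. -/
noncomputable def cov (h2 : (2 : K) ≠ 0) {i₀ i₁ : ι} (h : i₀ < i₁) (h₀ : ¬ o i₀) (h₁ : ¬ o i₁) :
    SuperLie K where
  carrier := (ι → K) × (PP ι o → K) × (K × K)
  J := covJ K o
  br := covbr K o h
  J_inv X := by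
    rw [covJ_apply, covJ_apply]
    refine Prod.ext ?_ (Prod.ext ?_ rfl)
    · funext i
      simp only [← mul_assoc, sg_sq, one_mul]
    · funext p
      have e1 := sg_sq (K := K) o p.1.1
      have e2 := sg_sq (K := K) o p.1.2
      dsimp only
      linear_combination (X.2.1 p) * (sg K o p.1.2) ^ 2 * e1 + (X.2.1 p) * e2
  J_br X Y := by
    rw [covbr_apply, covJ_apply, covbr_apply, covJ_apply, covJ_apply]
    refine Prod.ext ?_ (Prod.ext ?_ ?_)
    · funext i; simp
    · funext p; dsimp only; ring
    · simp [sg_of_not o h₀, sg_of_not o h₁]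
  skew_e X Y hX := by
    rw [covbr_apply, covbr_apply]
    refine Prod.ext ?_ (Prod.ext ?_ ?_)
    · simp
    · funext p
      dsimp only [Prod.snd_neg, Prod.fst_neg, Pi.neg_apply]
      by_cases hp : o p.1.1 ∧ o p.1.2
      · rw [cov_even o h2 hX hp.1, cov_even o h2 hX hp.2]; ring
      · simp only [ep, hp, if_false]; ring
    · simp
  skew_o X Y hX hY := by
    rw [covbr_apply, covbr_apply]
    refine Prod.ext ?_ (Prod.ext ?_ ?_)
    · simp
    · funext p
      dsimp only
      by_cases hp : o p.1.1
      · by_cases hq : o p.1.2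
        · simp only [ep, hp, hq, and_self, if_true]; ring
        · rw [cov_odd o h2 hX hq, cov_odd o h2 hY hq]; ring
      · rw [cov_odd o h2 hX hp, cov_odd o h2 hY hp]; ring
    · simp [cov_odd o h2 hX h₀, cov_odd o h2 hX h₁, cov_odd o h2 hY h₀, cov_odd o h2 hY h₁]
  jacobi a b c X Y Z hX hY hZ := by
    have hep : ep K o i₀ i₁ = 1 := by simp [ep, h₀]
    have hs : (a = false ∧ b = false ∧ c = false) ∨ (X.1 i₀ = 0 ∧ X.1 i₁ = 0) ∨
        (Y.1 i₀ = 0 ∧ Y.1 i₁ = 0) ∨ (Z.1 i₀ = 0 ∧ Z.1 i₁ = 0) := by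
      cases a
      · cases b
        · cases c
          · exact Or.inl ⟨rfl, rfl, rfl⟩
          · have hZ' : covJ K o Z = -Z := by simpa using hZ
            exact Or.inr (Or.inr (Or.inr ⟨cov_odd o h2 hZ' h₀, cov_odd o h2 hZ' h₁⟩))
        · have hY' : covJ K o Y = -Y := by simpa using hY
          exact Or.inr (Or.inr (Or.inl ⟨cov_odd o h2 hY' h₀, cov_odd o h2 hY' h₁⟩))
      · have hX' : covJ K o X = -X := by simpa using hX
        exact Or.inr (Or.inl ⟨cov_odd o h2 hX' h₀, cov_odd o h2 hX' h₁⟩)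
    have key : ∀ s₁ s₂ s₃ : K, ((s₁ = 1 ∧ s₂ = 1 ∧ s₃ = 1) ∨ (X.1 i₀ = 0 ∧ X.1 i₁ = 0) ∨
        (Y.1 i₀ = 0 ∧ Y.1 i₁ = 0) ∨ (Z.1 i₀ = 0 ∧ Z.1 i₁ = 0)) →
        s₁ • covbr K o h X (covbr K o h Y Z) + s₂ • covbr K o h Y (covbr K o h Z X) +
          s₃ • covbr K o h Z (covbr K o h X Y) = 0 := by
      intro s₁ s₂ s₃ hh
      simp only [covbr_apply]
      refine Prod.ext ?_ (Prod.ext ?_ ?_)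
      · simp
      · funext p; simp
      · rcases hh with ⟨rfl, rfl, rfl⟩ | ⟨e0, e1⟩ | ⟨e0, e1⟩ | ⟨e0, e1⟩
        · refine Prod.ext ?_ ?_
          · simp [hep]; ring
          · simp [hep]; ring
        all_goals simp [e0, e1]
    apply key
    rcases hs with ⟨rfl, rfl, rfl⟩ | hs
    · exact Or.inl ⟨rfl, rfl, rfl⟩
    · exact Or.inr hs

open Classical in
lemma cov_ext (h2 : (2 : K) ≠ 0) {i₀ i₁ : ι} (h : i₀ < i₁) (h₀ : ¬ o i₀) (h₁ : ¬ o i₁)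
    (A : SuperLie K) (e : ι → A.carrier) (z : A.carrier)
    (hee : ∀ i, ¬ o i → A.J (e i) = e i) (heo : ∀ i, o i → A.J (e i) = - e i) (hz : A.J z = z)
    (hli : ∀ (v : ι → K) (c : K), ∑ i, v i • e i + c • z = 0 → v = 0 ∧ c = 0)
    (hsp : ∀ a : A.carrier, ∃ (v : ι → K) (c : K), ∑ i, v i • e i + c • z = a)
    (h01 : A.br (e i₀) (e i₁) = z) (hzc : z ∈ A.center)
    (hc : ∀ i, i ≠ i₀ → i ≠ i₁ → e i ∈ A.center)
    [FiniteDimensional K A.carrier] (hdim : finrank K A.carrier = Nat.card ι + 1) :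
    ∃ (B : SuperLie K) (f : Hom B A),
      Surjective f.toLin ∧ LinearMap.ker f.toLin ≤ B.center ⊓ B.derived ∧
      finrank K (LinearMap.ker f.toLin) = Nat.card (PP ι o) + 1 := by
  let F : ((ι → K) × (PP ι o → K) × (K × K)) →ₗ[K] A.carrier :=
    { toFun := fun X => ∑ i, X.1 i • e i + X.2.1 ⟨(i₀, i₁), Or.inl h⟩ • z
      map_add' := by
        intro X Y
        simp only [Prod.fst_add, Prod.snd_add, Pi.add_apply, add_smul, Finset.sum_add_distrib]
        abel
      map_smul' := by
        intro c X
        simp only [Prod.smul_fst, Prod.smul_snd, Pi.smul_apply, smul_eq_mul, mul_smul,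
          Finset.smul_sum, smul_add, RingHom.id_apply] }
  have hF : ∀ X, F X = ∑ i, X.1 i • e i + X.2.1 ⟨(i₀, i₁), Or.inl h⟩ • z := fun _ => rfl
  have hne : i₀ ≠ i₁ := h.ne
  have hep : ep K o i₀ i₁ = 1 := by simp [ep, h₀]
  have h10 : A.br (e i₁) (e i₀) = -z := by rw [A.skew_e _ _ (hee _ h₁), h01]
  have h00 : A.br (e i₀) (e i₀) = 0 := eq_zero_of_eq_neg h2 (A.skew_e _ _ (hee _ h₀))
  have h11 : A.br (e i₁) (e i₁) = 0 := eq_zero_of_eq_neg h2 (A.skew_e _ _ (hee _ h₁))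
  have hdec : ∀ v : ι → K, ∃ r ∈ A.center, ∑ i, v i • e i = v i₀ • e i₀ + (v i₁ • e i₁ + r) := by
    intro v
    refine ⟨∑ i ∈ (Finset.univ.erase i₀).erase i₁, v i • e i, ?_, ?_⟩
    · refine Submodule.sum_mem _ fun i hi => Submodule.smul_mem _ _ ?_
      simp only [Finset.mem_erase, Finset.mem_univ, and_true] at hi
      exact hc i hi.2 hi.1
    · rw [Finset.add_sum_erase _ (fun i => v i • e i) (by simp [hne.symm]),
        Finset.add_sum_erase _ (fun i => v i • e i) (by simp)]
  let C := cov o h2 h h₀ h₁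
  have hmapJ : ∀ X : (ι → K) × (PP ι o → K) × (K × K), F (covJ K o X) = A.J (F X) := by
    intro X
    rw [hF, hF, covJ_apply]
    simp only [map_add, map_sum, map_smul, hz, sg_of_not o h₀, sg_of_not o h₁, one_mul]
    congr 1
    refine Finset.sum_congr rfl fun i _ => ?_
    by_cases hi : o i
    · rw [sg_of o hi, heo i hi]; simp
    · rw [sg_of_not o hi, hee i hi]; simp
  have hmapbr : ∀ X Y : (ι → K) × (PP ι o → K) × (K × K),
      F (covbr K o h X Y) = A.br (F X) (F Y) := by
    intro X Y
    rw [hF, hF, hF, covbr_apply]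
    obtain ⟨r, hr, hr'⟩ := hdec X.1
    obtain ⟨t, ht, ht'⟩ := hdec Y.1
    rw [hr', ht']
    simp only [map_add, LinearMap.add_apply, map_smul, LinearMap.smul_apply, h01, h10, h00, h11,
      mem_center.1 hr, br_center h2 ht, mem_center.1 hzc, br_center h2 hzc, smul_zero, add_zero,
      zero_add, Pi.zero_apply, zero_smul, Finset.sum_const_zero, hep, one_mul]
    module
  let f : Hom C A := ⟨F, hmapJ, hmapbr⟩
  have hsurj : Surjective F := by
    intro a
    obtain ⟨v, c, rfl⟩ := hsp a
    exact ⟨(v, fun _ => c, 0), rfl⟩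
  have hker : ∀ X : (ι → K) × (PP ι o → K) × (K × K), F X = 0 → X ∈ C.center ⊓ C.derived := by
    intro X hX
    rw [hF] at hX
    obtain ⟨hv, hcz⟩ := hli _ _ hX
    have hzero : ∀ Y : (ι → K) × (PP ι o → K) × (K × K), covbr K o h X Y = 0 := by
      intro Y
      rw [covbr_apply, hv, hcz]
      ext <;> simp
    refine ⟨mem_center.2 fun Y => hzero Y, ?_⟩
    · -- derived
      have hS : ∀ p : PP ι o,
          ((0, Pi.single p 1, 0) : (ι → K) × (PP ι o → K) × (K × K)) ∈ C.derived := by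
        rintro ⟨⟨i, j⟩, hp⟩
        have hb : covbr K o h (Pi.single i 1, 0, 0) (Pi.single j 1, 0, 0) ∈ C.derived :=
          br_mem_derived (A := C) _ _
        have hval : ∃ c : K, c ≠ 0 ∧
            covbr K o h (Pi.single i 1, 0, 0) (Pi.single j 1, 0, 0) =
            c • ((0, Pi.single ⟨(i, j), hp⟩ 1, 0) : (ι → K) × (PP ι o → K) × (K × K)) := by
          have hp' := hp
          dsimp only at hp'
          rcases hp' with hlt | ⟨rfl, hoi⟩
          · refine ⟨1, one_ne_zero, ?_⟩
            rw [covbr_apply, one_smul]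
            refine Prod.ext rfl (Prod.ext ?_ (by simp))
            funext ⟨⟨k, l⟩, hq⟩
            dsimp only
            have hnot : Pi.single (M := fun _ => K) i 1 l * Pi.single (M := fun _ => K) j 1 k = 0 := by
              by_cases hl : l = i
              · by_cases hk : k = j
                · subst hl; subst hk
                  exfalso
                  rcases hq with hq | ⟨hq, -⟩
                  · exact absurd (hlt.trans hq) (lt_irrefl _)
                  · exact hlt.ne hq.symm
                · simp [hk]
              · simp [hl]
            rw [hnot, mul_zero, sub_zero]
            simp only [Pi.single_apply, Subtype.mk.injEq, Prod.mk.injEq, mul_ite, mul_one, mul_zero]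
            by_cases hk : k = i <;> by_cases hl : l = j <;> simp [hk, hl]
          · refine ⟨2, h2, ?_⟩
            rw [covbr_apply]
            refine Prod.ext (by simp) (Prod.ext ?_ (by simp))
            funext ⟨⟨k, l⟩, hq⟩
            simp only [Prod.smul_mk, Pi.smul_apply, smul_eq_mul]
            simp only [Pi.single_apply, Subtype.mk.injEq, Prod.mk.injEq]
            by_cases hk : k = i
            · by_cases hl : l = i
              · subst hk; subst hl
                simp [ep, hoi]; norm_num
              · simp [hk, hl]
            · simp [hk]
        obtain ⟨c, hc0, hval⟩ := hval
        rw [hval] at hb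
        have := C.derived.smul_mem c⁻¹ hb
        have e : c⁻¹ • c • ((0, Pi.single ⟨(i, j), hp⟩ 1, 0) : (ι → K) × (PP ι o → K) × (K × K))
            = (0, Pi.single ⟨(i, j), hp⟩ 1, 0) := by
          rw [smul_smul, inv_mul_cancel₀ hc0, one_smul]
        rw [← e]
        exact this
      have hk : ∀ k : K × K,
          ((0, 0, k) : (ι → K) × (PP ι o → K) × (K × K)) ∈ C.derived := by
        intro k
        have e : covbr K o h (0, fun _ => 1, 0) (Pi.single i₀ k.1 + Pi.single i₁ k.2, 0, 0) =
            (0, 0, k) := by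
          rw [covbr_apply]
          refine Prod.ext rfl (Prod.ext ?_ ?_)
          · funext p; simp
          · simp [hne, hne.symm]
        rw [← e]
        exact br_mem_derived (A := C) _ _
      have ht : ((0, X.2.1, 0) : (ι → K) × (PP ι o → K) × (K × K)) ∈ C.derived := by
        have e : ((0, X.2.1, 0) : (ι → K) × (PP ι o → K) × (K × K)) =
            ∑ p, X.2.1 p • ((0, Pi.single p 1, 0) : (ι → K) × (PP ι o → K) × (K × K)) := by
          refine Prod.ext ?_ (Prod.ext ?_ ?_)
          · simp [Prod.fst_sum]
          · funext q
            simp [Prod.snd_sum, Prod.fst_sum, Finset.sum_apply, Pi.single_apply]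
          · simp [Prod.snd_sum]
        rw [e]
        exact Submodule.sum_mem _ fun p _ => Submodule.smul_mem C.derived _ (hS p)
      have : X = (((0, X.2.1, 0) : (ι → K) × (PP ι o → K) × (K × K)) + (0, 0, X.2.2) :
          (ι → K) × (PP ι o → K) × (K × K)) := by
        refine Prod.ext ?_ (Prod.ext ?_ ?_)
        · simpa using hv
        · simp
        · simp
      rw [this]
      exact C.derived.add_mem ht (hk _)
  refine ⟨C, f, hsurj, fun X hX => hker X hX, ?_⟩
  · have hr := LinearMap.finrank_range_add_finrank_ker F
    rw [LinearMap.range_eq_top.2 hsurj, finrank_top, hdim] at hr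
    simp only [finrank_prod, finrank_fintype_fun_eq_card, finrank_self,
      ← Nat.card_eq_fintype_card] at hr
    change finrank K (LinearMap.ker F) = _
    omega

end construction


/-- index type of the generators of `H(1,0) ⊕ A(a|n)` -/
def IX (a n : ℕ) : Type := Fin (2 * 1) ⊕ (Fin a ⊕ Fin n)

instance (a n : ℕ) : Fintype (IX a n) := inferInstanceAs (Fintype (Fin (2 * 1) ⊕ (Fin a ⊕ Fin n)))

/-- ordering of the generators -/
def IX.toL {a n : ℕ} (i : IX a n) : Lex (Fin (2 * 1) ⊕ Lex (Fin a ⊕ Fin n)) :=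
  toLex (Sum.map id toLex i)

lemma IX.toL_inj {a n : ℕ} : Injective (IX.toL (a := a) (n := n)) := by
  intro i j hij
  have h1 : Sum.map id toLex i = Sum.map id toLex j := toLex.injective hij
  exact Sum.map_injective.2 ⟨injective_id, toLex.injective⟩ h1

noncomputable instance (a n : ℕ) : LinearOrder (IX a n) := LinearOrder.lift' IX.toL IX.toL_inj

lemma heis_ext (h2 : (2 : K) ≠ 0) [FiniteDimensional K A.carrier] {a n : ℕ}
    (hN : finrank K A.carrier = a + 3 + n) (hA : A.IsHeisEvenSum 1 0 a n) :
    ∃ (B : SuperLie K) (f : Hom B A) (d : ℕ),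
      Surjective f.toLin ∧ LinearMap.ker f.toLin ≤ B.center ⊓ B.derived ∧
      finrank K (LinearMap.ker f.toLin) = d ∧
      2 * d + (a + 2 + n) = (a + 2 + n) * (a + 2 + n) + 2 * n + 2 := by
  obtain ⟨x, y, z, u, v, hx, -, hz, hu, hv, hli, hsp, hxx, -, -, hzc, huc, hvc⟩ := hA
  let o : IX a n → Prop := fun i => i ∈ Set.range (fun j : Fin n => (Sum.inr (Sum.inr j) : IX a n))
  let e : IX a n → A.carrier := Sum.elim x (Sum.elim u v)
  let i₀ : IX a n := Sum.inl 0
  let i₁ : IX a n := Sum.inl 1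
  have h01 : i₀ < i₁ := by
    change IX.toL i₀ < IX.toL i₁
    exact Sum.Lex.inl_lt_inl_iff.2 (by decide)
  have ho : ∀ i : Fin (2 * 1), ¬ o (Sum.inl i : IX a n) := by
    rintro i ⟨j, hj⟩
    exact Sum.inr_ne_inl hj
  have ho' : ∀ i : Fin a, ¬ o (Sum.inr (Sum.inl i) : IX a n) := by
    rintro i ⟨j, hj⟩
    exact Sum.inr_ne_inl (Sum.inr_injective hj)
  have hcard : Nat.card (IX a n) = a + 2 + n := by
    change Nat.card (Fin (2 * 1) ⊕ (Fin a ⊕ Fin n)) = _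
    simp; omega
  have hco : Nat.card {i // o i} = n := by
    change Nat.card (Set.range (fun j : Fin n => (Sum.inr (Sum.inr j) : IX a n))) = n
    rw [Nat.card_range_of_injective]
    · simp
    · intro i j hij
      exact Sum.inr_injective (Sum.inr_injective hij)
  have hsum : ∀ w : IX a n → K, ∑ i, w i • e i =
      ∑ i, w (Sum.inl i : IX a n) • x i + (∑ i, w (Sum.inr (Sum.inl i) : IX a n) • u i +
        ∑ i, w (Sum.inr (Sum.inr i) : IX a n) • v i) := by
    intro w
    change ∑ i : Fin (2 * 1) ⊕ (Fin a ⊕ Fin n), w i • Sum.elim x (Sum.elim u v) i = _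
    rw [Fintype.sum_sum_type, Fintype.sum_sum_type]
    rfl
  have key := cov_ext o h2 h01 (ho 0) (ho 1) A e z ?_ ?_ (mem_even.1 hz) ?_ ?_ ?_ hzc ?_
    (by rw [hN, hcard]; omega)
  · obtain ⟨B, f, hf, hk, hd⟩ := key
    refine ⟨B, f, _, hf, hk, hd, ?_⟩
    have := card_PP (IX a n) o
    rw [hcard, hco] at this
    omega
  · rintro (i | i | i) hi
    · exact mem_even.1 (hx i)
    · exact mem_even.1 (hu i)
    · exact absurd ⟨i, rfl⟩ hi
  · rintro (i | i | i) hi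
    · exact absurd hi (ho i)
    · exact absurd hi (ho' i)
    · exact mem_odd.1 (hv i)
  · intro w c hw
    rw [hsum] at hw
    rw [Fintype.linearIndependent_iff] at hli
    have h := hli (Sum.elim (fun i => w (Sum.inl i : IX a n)) (Sum.elim 0 (Sum.elim (fun _ => c)
      (Sum.elim (fun i => w (Sum.inr (Sum.inl i) : IX a n))
        (fun i => w (Sum.inr (Sum.inr i) : IX a n)))))) (by
          rw [← hw]
          simp only [Fintype.sum_sum_type, Sum.elim_inl, Sum.elim_inr, Finset.univ_eq_empty,
            Finset.sum_empty, Finset.univ_unique, Finset.sum_singleton]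
          abel)
    refine ⟨?_, h (Sum.inr (Sum.inr (Sum.inl 0)))⟩
    funext i
    rcases i with i | i | i
    · exact h (Sum.inl i)
    · exact h (Sum.inr (Sum.inr (Sum.inr (Sum.inl i))))
    · exact h (Sum.inr (Sum.inr (Sum.inr (Sum.inr i))))
  · intro b
    have hb : b ∈ Submodule.span K (Set.range
      (Sum.elim x (Sum.elim y (Sum.elim (fun _ : Fin 1 => z) (Sum.elim u v))))) := by
      rw [hsp]; trivial
    obtain ⟨g, hg⟩ := (Submodule.mem_span_range_iff_exists_fun K).1 hb
    refine ⟨(Sum.elim (fun i => g (Sum.inl i)) (Sum.elim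
      (fun i => g (Sum.inr (Sum.inr (Sum.inr (Sum.inl i)))))
      (fun i => g (Sum.inr (Sum.inr (Sum.inr (Sum.inr i)))))) :
        Fin (2 * 1) ⊕ (Fin a ⊕ Fin n) → K), g (Sum.inr (Sum.inr (Sum.inl 0))), ?_⟩
    refine (congrArg (· + g (Sum.inr (Sum.inr (Sum.inl 0))) • z) (hsum _)).trans ?_
    rw [← hg]
    simp only [Fintype.sum_sum_type, Sum.elim_inl, Sum.elim_inr, Finset.univ_eq_empty,
            Finset.sum_empty, Finset.univ_unique, Finset.sum_singleton, Fin.default_eq_zero]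
    abel
  · have := hxx 0 1
    have h' : A.br (x 0) (x 1) = z := by simpa using this
    exact h'
  · rintro (i | i | i) hi0 hi1
    · exfalso
      change Fin 2 at i
      fin_cases i
      · exact hi0 rfl
      · exact hi1 rfl
    · exact huc i
    · exact hvc i

end helpers

end SuperLie

open SuperLie
/-- For a nilpotent Lie superalgebra of dimension `(m|n)` with
`dim L' = (r|s)`, `r + s ≥ 1`,
`dim M(L) ≤ ½(m+n+r+s-2)(m+n-r-s-1) + n + 1`, and for `r+s = 1` equality holds
iff `L ≅ H(1,0) ⊕ A(m-3|n)`. (Stated multiplied by `2` in `ℤ`.) -/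
theorem stmt19 {K : Type} [Field K] (h2 : (2 : K) ≠ 0) (h3 : (3 : K) ≠ 0)
    (A : SuperLie K) [FiniteDimensional K A.carrier] (hnil : A.IsNilpotent)
    (m n r s : ℕ) (hm : m = finrank K A.evenPart) (hn : n = finrank K A.oddPart)
    (hr : r = finrank K ↥(A.derived ⊓ A.evenPart))
    (hs : s = finrank K ↥(A.derived ⊓ A.oddPart))
    (hrs : 1 ≤ r + s) :
    2 * (A.multDim : ℤ) ≤
      ((m : ℤ) + n + r + s - 2) * ((m : ℤ) + n - r - s - 1) + 2 * n + 2 ∧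
    (r + s = 1 →
      (2 * (A.multDim : ℤ) =
          ((m : ℤ) + n + r + s - 2) * ((m : ℤ) + n - r - s - 1) + 2 * n + 2 ↔
        ∃ a : ℕ, m = a + 3 ∧ A.IsHeisEvenSum 1 0 a n)) := by
  have hder : finrank K A.derived = r + s := by
    rw [hr, hs]; exact (finrank_graded h2 J_derived).symm
  have hdim : finrank K A.carrier = m + n := by
    rw [hm, hn]; exact (finrank_even_odd h2 A).symm
  have hbd : ∀ d ∈ {d | ∃ (B : SuperLie K) (f : Hom B A), Surjective f.toLin ∧
      LinearMap.ker f.toLin ≤ B.center ⊓ B.derived ∧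
      finrank K (LinearMap.ker f.toLin) = d},
      2 * (d : ℤ) ≤ ((m : ℤ) + n + r + s - 2) * ((m : ℤ) + n - r - s - 1) + 2 * n + 2 := by
    rintro d ⟨B, f, hf, hk, rfl⟩
    have hfd := ext_finite h2 f hf hk
    obtain ⟨e1, e2, e3⟩ := ext_dims h2 f hf (hk.trans inf_le_right)
    obtain ⟨R, hR⟩ : ∃ R, r + s = R + 1 := ⟨r + s - 1, by omega⟩
    have := Stem.bound h2 R B hfd _ (ext_stem hnil f hf hk) (m + n) n (by rw [e1, hdim])
      (by rw [e2, ← hn]) (by rw [e3, hder, hR])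
    have hR' : (s : ℤ) = R + 1 - r := by omega
    rw [hR']
    push_cast at this
    refine this.trans (le_of_eq ?_)
    ring
  have hmem : A.multDim ∈ {d | ∃ (B : SuperLie K) (f : Hom B A), Surjective f.toLin ∧
      LinearMap.ker f.toLin ≤ B.center ⊓ B.derived ∧
      finrank K (LinearMap.ker f.toLin) = d} := by
    refine Nat.sSup_mem ?_ ?_
    · exact ⟨_, A, ⟨LinearMap.id, fun _ => rfl, fun _ _ => rfl⟩, surjective_id, by simp, rfl⟩
    · refine ⟨(((m : ℤ) + n + r + s - 2) * ((m : ℤ) + n - r - s - 1) + 2 * n + 2).toNat, ?_⟩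
      intro d hd
      have := hbd d hd
      omega
  refine ⟨hbd _ hmem, fun h1 => ⟨fun heq => ?_, ?_⟩⟩
  · obtain ⟨B, f, hf, hk, hd⟩ := hmem
    have hfd := ext_finite h2 f hf hk
    obtain ⟨e1, e2, e3⟩ := ext_dims h2 f hf (hk.trans inf_le_right)
    have hst := ext_stem hnil f hf hk
    have hR : finrank K B.derived = finrank K (LinearMap.ker f.toLin) + 1 := by
      rw [e3, hder, h1]
    obtain ⟨z, hze, hzd, hzn, hzQ, hi⟩ := (hst.bound_one h2 (m + n) n (by rw [e1, hdim])
      (by rw [e2, ← hn]) hR).2 (by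
        rw [hd, heq]
        have hs' : (s : ℤ) = 1 - r := by omega
        rw [hs']
        push_cast
        ring)
    obtain ⟨a, ha, hH⟩ := heis_of_eq h2 f hf hst hR hze hzd hzn hzQ hi
    exact ⟨a, hm.trans ha, by rw [hn]; exact hH⟩
  · rintro ⟨a, ha, hH⟩
    refine le_antisymm (hbd _ hmem) ?_
    obtain ⟨B, f, d, hf, hk, hd, hcalc⟩ := heis_ext h2 (by rw [hdim, ha]) hH
    have hle : d ≤ A.multDim := by
      refine le_csSup ?_ ⟨B, f, hf, hk, hd⟩
      refine ⟨(((m : ℤ) + n + r + s - 2) * ((m : ℤ) + n - r - s - 1) + 2 * n + 2).toNat, ?_⟩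
      intro d hd
      have := hbd d hd
      omega
    have hs' : (s : ℤ) = 1 - r := by omega
    have hle' : (d : ℤ) ≤ A.multDim := by exact_mod_cast hle
    have hc : (2 * d + (a + 2 + n) : ℤ) = (a + 2 + n) * (a + 2 + n) + 2 * n + 2 := by
      exact_mod_cast hcalc
    rw [hs', ha]
    push_cast
    nlinarith
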